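/- arXiv:2307.02324 — 4 statements merged into one kernel-verified Lean document; each statement's English description precedes it below -/
import Mathlib

section
/- For every graphon f, ‖L_f‖ = (1/2) sup{ ∫_{[0,1]²} f(x,y) (u(x) − u(y))² dx dy : u ∈ L²([0,1]), ‖u‖₂ ≤ 1 }. Consequently, if h₁ and h₂ are graphons with h₁(x,y) ≤ h₂(x,y) for almost every (x,y) ∈ [0,1]², then ‖L_{h₁}‖ ≤ ‖L_{h₂}‖. -/
/-!
The Laplacian operator `L_f` is a bounded self-adjoint positive operator on `L²([0,1])`, and the
theorem is the variational formula `‖L‖ = sup ⟨Lu, u⟩` for such operators. The form is explicit: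
by Fubini and the symmetry of `f`,
`2 ⟨L_f u, v⟩ = ∫∫ f(x,y) (u(x) - u(y)) (v(x) - v(y))` (`two_mul_integral_lapApply_mul`), so
`Q_f(u) = ∫∫ f(x,y) (u(x) - u(y))²` equals `2 ⟨L_f u, u⟩`.

* `Q_f ≤ 2‖L_f‖` on the unit ball is Cauchy–Schwarz for `⟨L_f u, u⟩`.
* Conversely, suppose `Q_f(w) ≤ 2 M ‖w‖²` for all `w`. Cauchy–Schwarz for the nonnegative form
  applied to `(u, L_f u)` gives
  `‖L_f u‖⁴ ≤ ¼ Q_f(u) Q_f(L_f u) ≤ M² ‖u‖² ‖L_f u‖²`, hence `‖L_f u‖ ≤ M ‖u‖`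
  (`integral_lapApply_sq_le`).

The crude bound `Q_f(w) ≤ 4 ‖w‖²` makes both suprema finite. Monotonicity in the graphon is
then inherited from the monotonicity of `f ↦ Q_f(u)` for each fixed `u`.
-/

open MeasureTheory Filter Set
open scoped BigOperators

noncomputable section

/-- The unit interval `[0,1] ⊆ ℝ`. -/
def UI : Set ℝ := Set.Icc 0 1

/-- A graphon: a symmetric measurable function with values in `[0,1]`. -/
def IsGraphon (f : ℝ → ℝ → ℝ) : Prop :=
  (∀ x y, f x y = f y x) ∧ Measurable (Function.uncurry f) ∧
    ∀ x y, f x y ∈ Set.Icc (0 : ℝ) 1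

/-- Membership in `L²([0,1])`. -/
def MemL2 (u : ℝ → ℝ) : Prop :=
  Measurable u ∧ IntegrableOn (fun x => u x ^ 2) UI

/-- The `L²([0,1])`-norm. -/
def l2 (u : ℝ → ℝ) : ℝ := (∫ x in UI, u x ^ 2) ^ (1/2 : ℝ)

/-- The Laplacian graphon operator applied to `u`. -/
def lapApply (f : ℝ → ℝ → ℝ) (u : ℝ → ℝ) (x : ℝ) : ℝ :=
  ∫ y in UI, f x y * (u x - u y)

/-- The operator norm of the Laplacian graphon operator. -/
def lapNorm (f : ℝ → ℝ → ℝ) : ℝ :=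
  sSup {c | ∃ u : ℝ → ℝ, MemL2 u ∧ l2 u = 1 ∧ c = l2 (lapApply f u)}

/-- The degree function of a graphon. -/
def degFun (f : ℝ → ℝ → ℝ) (x : ℝ) : ℝ := ∫ y in UI, f x y

/-- The essential supremum of the degree function. -/
def degSup (f : ℝ → ℝ → ℝ) : ℝ := essSup (degFun f) (volume.restrict UI)

/-- Bernoulli relative entropy `R(a|b)`. -/
def relEnt (a b : ℝ) : ℝ :=
  a * Real.log (a / b) + (1 - a) * Real.log ((1 - a) / (1 - b))

/-- The relative entropy functional `I_r(h)`. -/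
def Ir (r h : ℝ → ℝ → ℝ) : ℝ :=
  ∫ p in UI ×ˢ UI, relEnt (h p.1 p.2) (r p.1 p.2)

/-- The downward rate function `ψ_r`. -/
def psiLow (r : ℝ → ℝ → ℝ) (β : ℝ) : ℝ :=
  sInf {c | ∃ h, IsGraphon h ∧ lapNorm h ≤ β ∧ c = Ir r h}

/-- A Lebesgue-measure-preserving bijection of `[0,1]`. -/
structure MPB where
  toFun : ℝ → ℝ
  bijOn : Set.BijOn toFun UI UI
  measurePreserving :
    MeasurePreserving toFun (volume.restrict UI) (volume.restrict UI)

/-- The cut distance `d_□`. -/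
def cutDist (f g : ℝ → ℝ → ℝ) : ℝ :=
  sSup {c | ∃ S T : Set ℝ, MeasurableSet S ∧ MeasurableSet T ∧ S ⊆ UI ∧ T ⊆ UI ∧
    c = |∫ x in S, ∫ y in T, (f x y - g x y)|}

/-- The cut metric `δ_□`. -/
def cutMetric (f g : ℝ → ℝ → ℝ) : ℝ :=
  sInf {c | ∃ φ : MPB, c = cutDist f (fun x y => g (φ.toFun x) (φ.toFun y))}

/-- The rate function `J_r` (infimum of `I_r` over relabelings). -/
def Jrate (r h : ℝ → ℝ → ℝ) : ℝ :=
  sInf {c | ∃ φ : MPB, c = Ir r (fun x y => h (φ.toFun x) (φ.toFun y))}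

/-- Open sets of graphons in the topology induced by the cut metric. -/
def CutOpen (O : Set (ℝ → ℝ → ℝ)) : Prop :=
  ∀ f ∈ O, ∃ ε > 0, ∀ g, IsGraphon g → cutMetric f g < ε → g ∈ O

/-- Closed sets of graphons in the topology induced by the cut metric. -/
def CutClosed (C : Set (ℝ → ℝ → ℝ)) : Prop :=
  ∀ f, IsGraphon f → f ∉ C → ∃ ε > 0, ∀ g, IsGraphon g → cutMetric f g < ε → g ∉ C

/-- Adjacency matrices of simple graphs on `N` vertices. -/
abbrev AdjMat (N : ℕ) :=
  {A : Fin N → Fin N → Bool // (∀ i j, A i j = A j i) ∧ ∀ i, A i i = false}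

/-- Probability weight of a configuration of the inhomogeneous ERRG. -/
def errgWeight (N : ℕ) (p : Fin N → Fin N → ℝ) (A : AdjMat N) : ℝ :=
  ∏ i : Fin N, ∏ j : Fin N,
    if i < j then (if A.1 i j then p i j else 1 - p i j) else 1

open Classical in
/-- The law of the inhomogeneous ERRG with edge probabilities `p`. -/
def errgProb (N : ℕ) (p : Fin N → Fin N → ℝ) (E : Set (AdjMat N)) : ℝ :=
  ∑ A : AdjMat N, if A ∈ E then errgWeight N p A else 0

/-- Degree of vertex `i`. -/
def degRG {N : ℕ} (A : AdjMat N) (i : Fin N) : ℝ :=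
  ∑ j : Fin N, if A.1 i j then (1 : ℝ) else 0

/-- The Laplacian matrix `L = D - A`. -/
def lapMat {N : ℕ} (A : AdjMat N) : Matrix (Fin N) (Fin N) ℝ :=
  fun i j => (if i = j then degRG A i else 0) - (if A.1 i j then 1 else 0)

/-- The largest eigenvalue of a matrix. -/
def lambdaMax {N : ℕ} (M : Matrix (Fin N) (Fin N) ℝ) : ℝ :=
  sSup {μ | ∃ v : Fin N → ℝ, v ≠ 0 ∧ M.mulVec v = μ • v}

/-- The spectral norm (largest absolute value of an eigenvalue) of a matrix. -/
def specNorm {N : ℕ} (M : Matrix (Fin N) (Fin N) ℝ) : ℝ :=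
  sSup {c | ∃ μ : ℝ, (∃ v : Fin N → ℝ, v ≠ 0 ∧ M.mulVec v = μ • v) ∧ c = |μ|}

/-- The `i`-th block of `[0,1]` divided into `N` blocks. -/
def blk (N : ℕ) (i : Fin N) : Set ℝ :=
  Set.Ico (((i : ℕ) : ℝ) / N) ((((i : ℕ) : ℝ) + 1) / N)

open Classical in
/-- The empirical graphon of a graph on `N` vertices. -/
def empGraphon (N : ℕ) (A : AdjMat N) (x y : ℝ) : ℝ :=
  if ∃ i j : Fin N, A.1 i j = true ∧ x ∈ blk N i ∧ y ∈ blk N j then 1 else 0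

/-- A function that is constant on the `N × N` blocks. -/
def IsBlockGraphon (N : ℕ) (f : ℝ → ℝ → ℝ) : Prop :=
  ∀ i j : Fin N, ∀ x₁ ∈ blk N i, ∀ x₂ ∈ blk N i, ∀ y₁ ∈ blk N j, ∀ y₂ ∈ blk N j,
    f x₁ y₁ = f x₂ y₂

/-- Edge probabilities induced by a block graphon. -/
def pOf (N : ℕ) (f : ℝ → ℝ → ℝ) (i j : Fin N) : ℝ :=
  f (((i : ℕ) : ℝ) / N) (((j : ℕ) : ℝ) / N)

/-- The cumulant generating function `Λ_r(x,θ)`. -/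
def Lam (r : ℝ → ℝ → ℝ) (x θ : ℝ) : ℝ :=
  ∫ y in UI, Real.log (r x y * Real.exp θ + 1 - r x y)

/-- The Legendre transform `J_r(x,β)`. -/
def Jfun (r : ℝ → ℝ → ℝ) (x β : ℝ) : ℝ :=
  ⨆ θ : ℝ, (θ * β - Lam r x θ)

/-- The upward rate function `ψ̂_r`. -/
def psiHat (r : ℝ → ℝ → ℝ) (β : ℝ) : ℝ :=
  ⨅ x : UI, Jfun r (x : ℝ) β

/-- The variance function `v_r`. -/
def vr (r : ℝ → ℝ → ℝ) (x : ℝ) : ℝ := ∫ y in UI, r x y * (1 - r x y)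

/-- The tilted kernel `r̂` (Cramér transform with parameter `θ`). -/
def tilt (r : ℝ → ℝ → ℝ) (θ x y : ℝ) : ℝ :=
  Real.exp θ * r x y / (Real.exp θ * r x y + 1 - r x y)

/-- The tilted mean degree. -/
def degMoment (r : ℝ → ℝ → ℝ) (x θ : ℝ) : ℝ := ∫ y in UI, tilt r θ x y

/-- Extended-real-valued logarithm with `log x = ⊥` for `x ≤ 0`. -/
def elog (x : ℝ) : EReal := if x ≤ 0 then ⊥ else ((Real.log x : ℝ) : EReal)

/-- Standing assumptions on the reference graphon. -/
def GraphonAssump (r : ℝ → ℝ → ℝ) : Prop :=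
  IsGraphon r ∧ (∀ x ∈ UI, ∀ y ∈ UI, r x y ∈ Set.Ioo (0:ℝ) 1) ∧
    IntegrableOn (fun p : ℝ × ℝ => Real.log (r p.1 p.2)) (UI ×ˢ UI) ∧
    IntegrableOn (fun p : ℝ × ℝ => Real.log (1 - r p.1 p.2)) (UI ×ˢ UI)

/-- Standing convergence assumptions on the block graphons `r_N`. -/
def SeqAssump (r : ℝ → ℝ → ℝ) (rN : ℕ → ℝ → ℝ → ℝ) : Prop :=
  (∀ N, IsGraphon (rN N)) ∧ (∀ N, IsBlockGraphon N (rN N)) ∧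
  (∀ N, ∀ x ∈ UI, ∀ y ∈ UI, rN N x y ∈ Set.Ioo (0:ℝ) 1) ∧
  (∀ᵐ p ∂(volume.restrict (UI ×ˢ UI)),
    Tendsto (fun N => rN N (p : ℝ × ℝ).1 p.2) atTop (nhds (r p.1 p.2))) ∧
  Tendsto (fun N => ∫ p in UI ×ˢ UI, |rN N p.1 p.2 - r p.1 p.2|) atTop (nhds 0) ∧
  Tendsto (fun N => ∫ p in UI ×ˢ UI,
    |Real.log (rN N p.1 p.2) - Real.log (r p.1 p.2)|) atTop (nhds 0) ∧
  Tendsto (fun N => ∫ p in UI ×ˢ UI,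
    |Real.log (1 - rN N p.1 p.2) - Real.log (1 - r p.1 p.2)|) atTop (nhds 0)

/-- A graphon bounded between `rm` and `rp`, `0 < rm ≤ rp < 1`. -/
def BoundedGraphon (r : ℝ → ℝ → ℝ) (rm rp : ℝ) : Prop :=
  IsGraphon r ∧ 0 < rm ∧ rm ≤ rp ∧ rp < 1 ∧
    ∀ x ∈ UI, ∀ y ∈ UI, rm ≤ r x y ∧ r x y ≤ rp

/-- Sup-norm convergence on `[0,1]²`. -/
def SupConv (r : ℝ → ℝ → ℝ) (rN : ℕ → ℝ → ℝ → ℝ) : Prop :=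
  ∀ ε > 0, ∃ N₀, ∀ N ≥ N₀, ∀ x ∈ UI, ∀ y ∈ UI, |rN N x y - r x y| ≤ ε

/-- Pointwise convergence on `[0,1]²`. -/
def PtConv (r : ℝ → ℝ → ℝ) (rN : ℕ → ℝ → ℝ → ℝ) : Prop :=
  ∀ x ∈ UI, ∀ y ∈ UI, Tendsto (fun N => rN N x y) atTop (nhds (r x y))

/-- Non-negative definiteness of a kernel. -/
def NonnegDef (r : ℝ → ℝ → ℝ) : Prop :=
  ∀ u : ℝ → ℝ, MemL2 u → 0 ≤ ∫ p in UI ×ˢ UI, r p.1 p.2 * u p.1 * u p.2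

/-- `μ` is an eigenvalue of the Laplacian operator `L_f` on `L²([0,1])`. -/
def lapEigen (f : ℝ → ℝ → ℝ) (μ : ℝ) : Prop :=
  ∃ u : ℝ → ℝ, MemL2 u ∧ (∫ x in UI, u x ^ 2) ≠ 0 ∧
    ∀ᵐ x ∂(volume.restrict UI), lapApply f u x = μ * u x

/-! ### The `L²` norm and Cauchy–Schwarz -/

/-- Lebesgue measure on `[0,1]`. -/
abbrev muI : Measure ℝ := volume.restrict UI

instance : IsProbabilityMeasure muI := by
  constructor
  simp [muI, UI]

lemma restrict_square : (volume : Measure (ℝ × ℝ)).restrict (UI ×ˢ UI) = muI.prod muI := by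
  rw [Measure.volume_eq_prod, Measure.prod_restrict]

lemma MemL2.memLp {u : ℝ → ℝ} (hu : MemL2 u) : MemLp u 2 muI :=
  (memLp_two_iff_integrable_sq hu.1.aestronglyMeasurable).2 hu.2

/-- The quadratic form `Q_f(u) = ∫∫ f(x,y) (u(x) - u(y))² dx dy`, which is `2 ⟨L_f u, u⟩`. -/
def quadForm (f : ℝ → ℝ → ℝ) (u : ℝ → ℝ) : ℝ :=
  ∫ p in UI ×ˢ UI, f p.1 p.2 * (u p.1 - u p.2) ^ 2

lemma integral_sq_nonneg (u : ℝ → ℝ) : 0 ≤ ∫ x in UI, u x ^ 2 :=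
  integral_nonneg fun x => sq_nonneg (u x)

lemma l2_eq_sqrt (u : ℝ → ℝ) : l2 u = √(∫ x in UI, u x ^ 2) := by
  rw [l2, Real.sqrt_eq_rpow]

lemma l2_sq (u : ℝ → ℝ) : l2 u ^ 2 = ∫ x in UI, u x ^ 2 := by
  rw [l2_eq_sqrt, Real.sq_sqrt (integral_sq_nonneg u)]

lemma l2_nonneg (u : ℝ → ℝ) : 0 ≤ l2 u := by
  rw [l2_eq_sqrt]; exact Real.sqrt_nonneg _

/-- Cauchy–Schwarz for real square-integrable functions, from the discriminant of
`t ↦ ∫ (t F + G)² ≥ 0`. -/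
lemma integral_mul_sq_le {α : Type*} [MeasurableSpace α] {ν : Measure α} {F G : α → ℝ}
    (hF : MemLp F 2 ν) (hG : MemLp G 2 ν) :
    (∫ a, F a * G a ∂ν) ^ 2 ≤ (∫ a, F a ^ 2 ∂ν) * ∫ a, G a ^ 2 ∂ν := by
  have hFG : Integrable (fun a => F a * G a) ν := hF.integrable_mul hG
  have key : ∀ t : ℝ, 0 ≤ (∫ a, F a ^ 2 ∂ν) * (t * t) + (2 * ∫ a, F a * G a ∂ν) * t
      + ∫ a, G a ^ 2 ∂ν := by
    intro t
    have h : ∫ a, (t * F a + G a) ^ 2 ∂ν = (∫ a, F a ^ 2 ∂ν) * (t * t)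
        + (2 * ∫ a, F a * G a ∂ν) * t + ∫ a, G a ^ 2 ∂ν := by
      have e : ∀ a, (t * F a + G a) ^ 2
          = F a ^ 2 * (t * t) + (F a * G a) * (2 * t) + G a ^ 2 := fun a => by ring
      have i1 : Integrable (fun a => F a ^ 2 * (t * t)) ν := hF.integrable_sq.mul_const _
      have i2 : Integrable (fun a => F a * G a * (2 * t)) ν := hFG.mul_const _
      simp_rw [e]
      rw [integral_add (i1.fun_add i2) hG.integrable_sq, integral_add i1 i2,
        integral_mul_const, integral_mul_const]
      ring
    rw [← h]
    exact integral_nonneg fun a => sq_nonneg _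
  have := discrim_le_zero key
  rw [discrim] at this
  nlinarith

section

variable {f : ℝ → ℝ → ℝ} {u v : ℝ → ℝ}

/-! ### Measurability and integrability; `L_f` acts on `L²([0,1])` -/

lemma IsGraphon.aestronglyMeasurable (hf : IsGraphon f) {ν : Measure (ℝ × ℝ)} :
    AEStronglyMeasurable (fun p : ℝ × ℝ => f p.1 p.2) ν :=
  hf.2.1.aestronglyMeasurable

lemma IsGraphon.norm_le_one (hf : IsGraphon f) (x y : ℝ) : ‖f x y‖ ≤ 1 := by
  rw [Real.norm_eq_abs, abs_of_nonneg (hf.2.2 x y).1]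
  exact (hf.2.2 x y).2

lemma IsGraphon.integrable_mul (hf : IsGraphon f) {g : ℝ × ℝ → ℝ} {ν : Measure (ℝ × ℝ)}
    (hg : Integrable g ν) : Integrable (fun p => f p.1 p.2 * g p) ν :=
  hg.bdd_mul (c := 1) hf.aestronglyMeasurable
    (Eventually.of_forall fun p => hf.norm_le_one p.1 p.2)

lemma MemL2.memLp_fst (hu : MemL2 u) :
    MemLp (fun p : ℝ × ℝ => u p.1) 2 (muI.prod muI) :=
  hu.memLp.comp_fst muI

lemma MemL2.memLp_snd (hu : MemL2 u) :
    MemLp (fun p : ℝ × ℝ => u p.2) 2 (muI.prod muI) :=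
  hu.memLp.comp_snd muI

lemma MemL2.memLp_sub (hu : MemL2 u) :
    MemLp (fun p : ℝ × ℝ => u p.1 - u p.2) 2 (muI.prod muI) :=
  hu.memLp_fst.sub hu.memLp_snd

lemma IsGraphon.integrable_quad (hf : IsGraphon f) (hu : MemL2 u) :
    Integrable (fun p : ℝ × ℝ => f p.1 p.2 * (u p.1 - u p.2) ^ 2) (muI.prod muI) :=
  hf.integrable_mul hu.memLp_sub.integrable_sq

lemma measurable_lapApply (hf : IsGraphon f) (hu : MemL2 u) : Measurable (lapApply f u) := by
  have h : Measurable (fun p : ℝ × ℝ => f p.1 p.2 * (u p.1 - u p.2)) :=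
    hf.2.1.mul ((hu.1.comp measurable_fst).sub (hu.1.comp measurable_snd))
  exact (h.stronglyMeasurable.integral_prod_right' (ν := muI)).measurable

/-- `L_f` maps `L²([0,1])` to itself, because `|L_f u(x)| ≤ |u(x)| + ∫ |u|`. -/
lemma memL2_lapApply (hf : IsGraphon f) (hu : MemL2 u) : MemL2 (lapApply f u) := by
  have hm := measurable_lapApply hf hu
  have hi : Integrable u muI := hu.memLp.integrable (by norm_num)
  refine ⟨hm, (memLp_two_iff_integrable_sq hm.aestronglyMeasurable).1 ?_⟩
  have hb : MemLp (fun x => |u x| + ∫ y in UI, |u y|) 2 muI :=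
    hu.memLp.abs.add (memLp_const _)
  refine hb.mono' hm.aestronglyMeasurable (Eventually.of_forall fun x => ?_)
  calc ‖lapApply f u x‖ ≤ ∫ y in UI, (|u x| + |u y|) := by
        refine norm_integral_le_of_norm_le ((integrable_const _).add hi.abs)
          (Eventually.of_forall fun y => ?_)
        rw [norm_mul, Real.norm_eq_abs (u x - u y)]
        calc ‖f x y‖ * |u x - u y| ≤ 1 * |u x - u y| := by
              gcongr; exact hf.norm_le_one x y
          _ ≤ |u x| + |u y| := by rw [one_mul]; exact abs_sub _ _
    _ = |u x| + ∫ y in UI, |u y| := by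
        rw [integral_add (integrable_const _) hi.abs]
        simp

/-! ### The quadratic form of `L_f` -/

/-- The polarised form of `2 ⟨L_f u, u⟩ = Q_f(u)`: average `f(x,y) (u(x) - u(y)) v(x)` with its
image under `(x,y) ↦ (y,x)`. -/
lemma two_mul_integral_lapApply_mul (hf : IsGraphon f) (hu : MemL2 u) (hv : MemL2 v) :
    2 * ∫ x in UI, lapApply f u x * v x
      = ∫ p, f p.1 p.2 * ((u p.1 - u p.2) * (v p.1 - v p.2)) ∂(muI.prod muI) := by
  have h1 : Integrable (fun p : ℝ × ℝ => f p.1 p.2 * ((u p.1 - u p.2) * v p.1))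
      (muI.prod muI) := hf.integrable_mul (hu.memLp_sub.integrable_mul hv.memLp_fst)
  have h2 : Integrable (fun p : ℝ × ℝ => f p.1 p.2 * ((u p.1 - u p.2) * v p.2))
      (muI.prod muI) := hf.integrable_mul (hu.memLp_sub.integrable_mul hv.memLp_snd)
  have fub : ∫ x in UI, lapApply f u x * v x
      = ∫ p, f p.1 p.2 * ((u p.1 - u p.2) * v p.1) ∂(muI.prod muI) := by
    rw [integral_prod _ h1]
    refine integral_congr_ae (Eventually.of_forall fun x => ?_)
    simp only [lapApply]
    rw [← integral_mul_const]
    simp only [mul_assoc]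
  have swap : ∫ p, f p.1 p.2 * ((u p.1 - u p.2) * v p.1) ∂(muI.prod muI)
      = - ∫ p, f p.1 p.2 * ((u p.1 - u p.2) * v p.2) ∂(muI.prod muI) := by
    rw [← integral_prod_swap, ← integral_neg]
    refine integral_congr_ae (Eventually.of_forall fun p => ?_)
    simp only [Prod.fst_swap, Prod.snd_swap]
    rw [hf.1 p.2 p.1]
    ring
  have split : ∫ p, f p.1 p.2 * ((u p.1 - u p.2) * (v p.1 - v p.2)) ∂(muI.prod muI)
      = ∫ p, f p.1 p.2 * ((u p.1 - u p.2) * v p.1) ∂(muI.prod muI)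
        - ∫ p, f p.1 p.2 * ((u p.1 - u p.2) * v p.2) ∂(muI.prod muI) := by
    rw [← integral_sub h1 h2]
    refine integral_congr_ae (Eventually.of_forall fun p => ?_)
    simp only
    ring
  rw [split, fub]
  linarith

lemma two_mul_integral_lapApply_mul_self (hf : IsGraphon f) (hu : MemL2 u) :
    2 * ∫ x in UI, lapApply f u x * u x = quadForm f u := by
  rw [two_mul_integral_lapApply_mul hf hu hu, quadForm, restrict_square]
  simp only [sq]

lemma quadForm_nonneg (hf : IsGraphon f) (u : ℝ → ℝ) : 0 ≤ quadForm f u :=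
  integral_nonneg fun _ => mul_nonneg (hf.2.2 _ _).1 (sq_nonneg _)

lemma quadForm_smul (f : ℝ → ℝ → ℝ) (c : ℝ) (u : ℝ → ℝ) :
    quadForm f (fun x => c * u x) = c ^ 2 * quadForm f u := by
  rw [quadForm, quadForm, ← integral_const_mul]
  congr 1 with p
  ring

/-- From `f ≤ 1` and `(a - b)² ≤ 2 a² + 2 b²`. -/
lemma quadForm_le_four_mul (hf : IsGraphon f) (hu : MemL2 u) :
    quadForm f u ≤ 4 * ∫ x in UI, u x ^ 2 := by
  have i1 : Integrable (fun p : ℝ × ℝ => 2 * u p.1 ^ 2) (muI.prod muI) :=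
    hu.memLp_fst.integrable_sq.const_mul 2
  have i2 : Integrable (fun p : ℝ × ℝ => 2 * u p.2 ^ 2) (muI.prod muI) :=
    hu.memLp_snd.integrable_sq.const_mul 2
  rw [quadForm, restrict_square]
  calc ∫ p, f p.1 p.2 * (u p.1 - u p.2) ^ 2 ∂(muI.prod muI)
      ≤ ∫ p, (2 * u p.1 ^ 2 + 2 * u p.2 ^ 2) ∂(muI.prod muI) := by
        refine integral_mono (hf.integrable_quad hu) (i1.add i2) fun p => ?_
        have h0 := (hf.2.2 p.1 p.2).1
        have h1 := (hf.2.2 p.1 p.2).2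
        simp only
        nlinarith [mul_nonneg (sub_nonneg.2 h1) (sq_nonneg (u p.1 - u p.2)),
          sq_nonneg (u p.1 + u p.2)]
    _ = 4 * ∫ x in UI, u x ^ 2 := by
        rw [integral_add i1 i2, integral_const_mul, integral_const_mul,
          integral_fun_fst (fun x => u x ^ 2), integral_fun_snd (fun x => u x ^ 2)]
        simp only [probReal_univ, one_smul]
        ring

/-- Cauchy–Schwarz for the form `2 ⟨L_f u, v⟩`, as Cauchy–Schwarz in `L²([0,1]²)` for the
functions `√f(x,y) (u(x) - u(y))` and `√f(x,y) (v(x) - v(y))`. -/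
lemma two_mul_integral_lapApply_mul_sq_le (hf : IsGraphon f) (hu : MemL2 u) (hv : MemL2 v) :
    (2 * ∫ x in UI, lapApply f u x * v x) ^ 2 ≤ quadForm f u * quadForm f v := by
  have hs : AEStronglyMeasurable (fun p : ℝ × ℝ => √(f p.1 p.2)) (muI.prod muI) :=
    (Real.continuous_sqrt.measurable.comp hf.2.1).aestronglyMeasurable
  have e : ∀ (w : ℝ → ℝ) (p : ℝ × ℝ), (√(f p.1 p.2) * (w p.1 - w p.2)) ^ 2
      = f p.1 p.2 * (w p.1 - w p.2) ^ 2 := fun w p => by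
    rw [mul_pow, Real.sq_sqrt (hf.2.2 _ _).1]
  have hw : ∀ w, MemL2 w →
      MemLp (fun p : ℝ × ℝ => √(f p.1 p.2) * (w p.1 - w p.2)) 2 (muI.prod muI) := by
    intro w hw
    refine (memLp_two_iff_integrable_sq (hs.mul hw.memLp_sub.1)).2 ?_
    exact (hf.integrable_quad hw).congr (Eventually.of_forall fun p => (e w p).symm)
  have h := integral_mul_sq_le (hw u hu) (hw v hv)
  simp only [e] at h
  rw [two_mul_integral_lapApply_mul hf hu hv, quadForm, quadForm, restrict_square]
  refine le_of_eq_of_le ?_ h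
  congr 2 with p
  rw [mul_mul_mul_comm, Real.mul_self_sqrt (hf.2.2 _ _).1]

/-! ### Operator norm versus quadratic form -/

/-- A bound on the quadratic form bounds the operator: `‖L_f u‖ ≤ M ‖u‖` if `Q_f ≤ 2 M ‖·‖²`. -/
lemma integral_lapApply_sq_le (hf : IsGraphon f) (hu : MemL2 u) {M : ℝ} (hM : 0 ≤ M)
    (h : ∀ w, MemL2 w → quadForm f w ≤ 2 * M * ∫ x in UI, w x ^ 2) :
    ∫ x in UI, lapApply f u x ^ 2 ≤ M ^ 2 * ∫ x in UI, u x ^ 2 := by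
  have hL := memL2_lapApply hf hu
  have hcs := two_mul_integral_lapApply_mul_sq_le hf hu hL
  simp only [← sq] at hcs
  have h3 := mul_le_mul (h u hu) (h _ hL) (quadForm_nonneg hf _)
    (mul_nonneg (mul_nonneg zero_le_two hM) (integral_sq_nonneg u))
  have ha := integral_sq_nonneg u
  have hA := integral_sq_nonneg (lapApply f u)
  set A := ∫ x in UI, lapApply f u x ^ 2
  set a := ∫ x in UI, u x ^ 2
  rcases hA.eq_or_lt with h0 | h0
  · rw [← h0]; positivity
  · refine le_of_mul_le_mul_right ?_ h0
    nlinarith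

/-- By homogeneity, a bound for `Q_f` on unit vectors extends to all of `L²([0,1])`. -/
lemma quadForm_le_of_unit (hf : IsGraphon f) {C : ℝ}
    (h : ∀ w, MemL2 w → l2 w = 1 → quadForm f w ≤ C) (hu : MemL2 u) :
    quadForm f u ≤ C * ∫ x in UI, u x ^ 2 := by
  rcases (integral_sq_nonneg u).eq_or_lt with h0 | h0
  · have := quadForm_le_four_mul hf hu
    rw [← h0] at this ⊢
    linarith
  · have hc : ((l2 u)⁻¹) ^ 2 = (∫ x in UI, u x ^ 2)⁻¹ := by rw [inv_pow, l2_sq]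
    have hw : MemL2 (fun x => (l2 u)⁻¹ * u x) := by
      refine ⟨hu.1.const_mul _, ?_⟩
      simp only [mul_pow]
      exact hu.2.const_mul _
    have hn : l2 (fun x => (l2 u)⁻¹ * u x) = 1 := by
      rw [l2_eq_sqrt]
      simp only [mul_pow]
      rw [integral_const_mul, hc, inv_mul_cancel₀ h0.ne', Real.sqrt_one]
    have := h _ hw hn
    rw [quadForm_smul, hc, inv_mul_le_iff₀ h0] at this
    linarith

lemma l2_lapApply_le (hf : IsGraphon f) (hu : MemL2 u) (hu1 : l2 u = 1) {M : ℝ} (hM : 0 ≤ M)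
    (h : ∀ w, MemL2 w → quadForm f w ≤ 2 * M * ∫ x in UI, w x ^ 2) :
    l2 (lapApply f u) ≤ M := by
  have := integral_lapApply_sq_le hf hu hM h
  rw [← l2_sq u, hu1, ← l2_sq] at this
  exact le_of_sq_le_sq (by linarith) hM

lemma bddAbove_lapNorm (hf : IsGraphon f) :
    BddAbove {c | ∃ u : ℝ → ℝ, MemL2 u ∧ l2 u = 1 ∧ c = l2 (lapApply f u)} := by
  refine ⟨2, ?_⟩
  rintro c ⟨u, hu, hu1, rfl⟩
  refine l2_lapApply_le hf hu hu1 zero_le_two fun w hw => ?_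
  linarith [quadForm_le_four_mul hf hw]

lemma lapNorm_nonneg (f : ℝ → ℝ → ℝ) : 0 ≤ lapNorm f := by
  refine Real.sSup_nonneg ?_
  rintro c ⟨u, -, -, rfl⟩
  exact l2_nonneg _

lemma memL2_const (a : ℝ) : MemL2 fun _ => a :=
  ⟨measurable_const, integrable_const (μ := muI) _⟩

lemma l2_one : l2 (fun _ => 1) = 1 := by
  rw [l2_eq_sqrt]
  simp [UI]

lemma quadForm_le_lapNorm (hf : IsGraphon f) (hu : MemL2 u) :
    quadForm f u ≤ 2 * lapNorm f * ∫ x in UI, u x ^ 2 := by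
  refine quadForm_le_of_unit hf (fun w hw hw1 => ?_) hu
  have hN : l2 (lapApply f w) ≤ lapNorm f :=
    le_csSup (bddAbove_lapNorm hf) ⟨w, hw, hw1, rfl⟩
  have hcs := integral_mul_sq_le (memL2_lapApply hf hw).memLp hw.memLp
  rw [← l2_sq w, hw1, ← l2_sq, one_pow, mul_one] at hcs
  have := (le_abs_self _).trans (abs_le_of_sq_le_sq hcs (l2_nonneg _))
  linarith [two_mul_integral_lapApply_mul_self hf hw]

lemma bddAbove_quadForm (hf : IsGraphon f) :
    BddAbove {c | ∃ u : ℝ → ℝ, MemL2 u ∧ l2 u ≤ 1 ∧ c = quadForm f u} := by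
  refine ⟨4, ?_⟩
  rintro c ⟨u, hu, hu1, rfl⟩
  have h1 : ∫ x in UI, u x ^ 2 ≤ 1 := by
    rw [← l2_sq]; exact pow_le_one₀ (l2_nonneg u) hu1
  linarith [quadForm_le_four_mul hf hu]

lemma quadForm_sSup_nonempty (f : ℝ → ℝ → ℝ) :
    {c | ∃ u : ℝ → ℝ, MemL2 u ∧ l2 u ≤ 1 ∧ c = quadForm f u}.Nonempty :=
  ⟨_, fun _ => 1, memL2_const 1, l2_one.le, rfl⟩

lemma lapNorm_eq_half_sSup (hf : IsGraphon f) :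
    lapNorm f = (1 / 2) *
      sSup {c | ∃ u : ℝ → ℝ, MemL2 u ∧ l2 u ≤ 1 ∧ c = quadForm f u} := by
  have hbdd := bddAbove_quadForm hf
  have hnonneg : 0 ≤ sSup {c | ∃ u : ℝ → ℝ, MemL2 u ∧ l2 u ≤ 1 ∧ c = quadForm f u} := by
    refine Real.sSup_nonneg ?_
    rintro c ⟨u, -, -, rfl⟩
    exact quadForm_nonneg hf u
  refine le_antisymm ?_ ?_
  · refine csSup_le ⟨_, fun _ => 1, memL2_const 1, l2_one, rfl⟩ ?_
    rintro c ⟨u, hu, hu1, rfl⟩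
    refine l2_lapApply_le hf hu hu1 (by positivity) fun w hw => ?_
    refine quadForm_le_of_unit hf (fun w hw hw1 => ?_) hw
    have := le_csSup hbdd ⟨w, hw, hw1.le, rfl⟩
    linarith
  · suffices sSup {c | ∃ u : ℝ → ℝ, MemL2 u ∧ l2 u ≤ 1 ∧ c = quadForm f u} ≤ 2 * lapNorm f by
      linarith
    refine csSup_le (quadForm_sSup_nonempty f) ?_
    rintro c ⟨u, hu, hu1, rfl⟩
    refine (quadForm_le_lapNorm hf hu).trans (mul_le_of_le_one_right ?_ ?_)
    · linarith [lapNorm_nonneg f]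
    · rw [← l2_sq]; exact pow_le_one₀ (l2_nonneg u) hu1

lemma quadForm_mono {h₁ h₂ : ℝ → ℝ → ℝ} (hh₁ : IsGraphon h₁) (hh₂ : IsGraphon h₂)
    (hle : ∀ᵐ p ∂(volume.restrict (UI ×ˢ UI)), h₁ (p : ℝ × ℝ).1 p.2 ≤ h₂ p.1 p.2)
    (hu : MemL2 u) : quadForm h₁ u ≤ quadForm h₂ u := by
  rw [restrict_square] at hle
  rw [quadForm, quadForm, restrict_square]
  refine integral_mono_ae (hh₁.integrable_quad hu) (hh₂.integrable_quad hu) ?_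
  filter_upwards [hle] with p hp
  exact mul_le_mul_of_nonneg_right hp (sq_nonneg _)

end

/-- **Quadratic-form representation of the Laplacian operator norm and its
monotonicity in the graphon.** -/
theorem laplacian_norm_quadratic_form :
    (∀ f : ℝ → ℝ → ℝ, IsGraphon f →
      lapNorm f = (1 / 2) * sSup {c | ∃ u : ℝ → ℝ, MemL2 u ∧ l2 u ≤ 1 ∧
        c = ∫ p in UI ×ˢ UI, f p.1 p.2 * (u p.1 - u p.2) ^ 2}) ∧
    (∀ h₁ h₂ : ℝ → ℝ → ℝ, IsGraphon h₁ → IsGraphon h₂ →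
      (∀ᵐ p ∂(volume.restrict (UI ×ˢ UI)), h₁ (p : ℝ × ℝ).1 p.2 ≤ h₂ p.1 p.2) →
      lapNorm h₁ ≤ lapNorm h₂) := by
  refine ⟨fun f hf => lapNorm_eq_half_sSup hf, fun h₁ h₂ hh₁ hh₂ hle => ?_⟩
  rw [lapNorm_eq_half_sSup hh₁, lapNorm_eq_half_sSup hh₂]
  refine mul_le_mul_of_nonneg_left ?_ (by norm_num)
  refine csSup_le (quadForm_sSup_nonempty h₁) ?_
  rintro c ⟨u, hu, hu1, rfl⟩
  exact (quadForm_mono hh₁ hh₂ hle hu).trans (le_csSup (bddAbove_quadForm hh₂) ⟨u, hu, hu1, rfl⟩)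
end
end

section
/- Let r : [0,1]² → (0,1) be a graphon with log r, log(1−r) ∈ L¹([0,1]²). Then for every β > 0, inf{ I_r(h) : h ∈ W, ‖L_h‖ < β } = inf{ I_r(h) : h ∈ W, ‖L_h‖ ≤ β }. -/
/-!
The strict sublevel set is contained in the nonstrict one, which gives one inequality. For the
other, shrink a competitor `h` with `‖L_h‖ ≤ β` to `t h` with `0 ≤ t < 1`. Since `h ↦ L_h` is
linear, `‖L_{th}‖ = t ‖L_h‖ ≤ t β < β`. Since `a ↦ R(a|b)` is convex,
`I_r(th) ≤ t I_r(h) + (1 - t) I_r(0)`, where all terms are finite because `log r` and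
`log (1 - r)` are integrable. Letting `t → 1` shows that `I_r(h)` is at least the strict infimum.
-/

open MeasureTheory Filter Set
open scoped BigOperators

noncomputable section

/-- The convention `0 * log 0 = 0` makes this valid at `a = 0` and `a = 1` too. -/
lemma relEnt_eq {a b : ℝ} (hb : b ∈ Ioo (0 : ℝ) 1) :
    relEnt a b = -Real.binEntropy a - a * Real.log b - (1 - a) * Real.log (1 - b) := by
  have key : ∀ c d : ℝ, d ≠ 0 → c * Real.log (c / d) = c * Real.log c - c * Real.log d := by
    intro c d hd
    rcases eq_or_ne c 0 with rfl | hc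
    · simp
    · rw [Real.log_div hc hd]; ring
  rw [relEnt, key a b hb.1.ne', key (1 - a) (1 - b) (sub_pos.2 hb.2).ne', Real.binEntropy,
    Real.log_inv, Real.log_inv]
  ring

/-- A crude lower bound (the sharp one is `0`), enough to bound `I_r` from below. -/
lemma neg_log_two_le_relEnt {a b : ℝ} (ha : a ∈ Icc (0 : ℝ) 1) (hb : b ∈ Ioo (0 : ℝ) 1) :
    -Real.log 2 ≤ relEnt a b := by
  rw [relEnt_eq hb]
  have h1 := Real.binEntropy_le_log_two (p := a)
  have h2 := mul_nonpos_of_nonneg_of_nonpos ha.1 (Real.log_nonpos hb.1.le hb.2.le)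
  have h3 := mul_nonpos_of_nonneg_of_nonpos (sub_nonneg.2 ha.2)
    (Real.log_nonpos (sub_pos.2 hb.2).le (by linarith [hb.1]))
  linarith

/-- Convexity of `R(·|b)` along the segment from `0` to `a`. -/
lemma relEnt_smul_le {a b t : ℝ} (ha : a ∈ Icc (0 : ℝ) 1) (hb : b ∈ Ioo (0 : ℝ) 1)
    (ht : t ∈ Icc (0 : ℝ) 1) :
    relEnt (t * a) b ≤ t * relEnt a b + (1 - t) * relEnt 0 b := by
  rw [relEnt_eq hb, relEnt_eq hb, relEnt_eq hb]
  have h := Real.strictConcave_binEntropy.concaveOn.2 ha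
    (left_mem_Icc.2 zero_le_one) ht.1 (sub_nonneg.2 ht.2) (by ring)
  simp only [smul_eq_mul, mul_zero, add_zero, Real.binEntropy_zero] at h ⊢
  linarith

lemma measurableSet_square : MeasurableSet (UI ×ˢ UI) :=
  measurableSet_Icc.prod measurableSet_Icc

lemma volume_square_lt_top : volume (UI ×ˢ UI) < ⊤ :=
  (isCompact_Icc.prod isCompact_Icc).measure_lt_top

lemma integrableOn_relEnt {r h : ℝ → ℝ → ℝ} (hr : GraphonAssump r) (hh : IsGraphon h) :
    IntegrableOn (fun p : ℝ × ℝ => relEnt (h p.1 p.2) (r p.1 p.2)) (UI ×ˢ UI) := by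
  have : IsFiniteMeasure (volume.restrict (UI ×ˢ UI)) := ⟨by simpa using volume_square_lt_top⟩
  obtain ⟨-, hr01, hl, hl'⟩ := hr
  have hm : Measurable (fun p : ℝ × ℝ => h p.1 p.2) := hh.2.1
  have i1 : IntegrableOn (fun p : ℝ × ℝ => Real.binEntropy (h p.1 p.2)) (UI ×ˢ UI) := by
    refine Integrable.of_bound
      (Real.binEntropy_continuous.measurable.comp hm).aestronglyMeasurable (Real.log 2)
      (.of_forall fun p => ?_)
    rw [Real.norm_of_nonneg (Real.binEntropy_nonneg (hh.2.2 _ _).1 (hh.2.2 _ _).2)]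
    exact Real.binEntropy_le_log_two
  have i2 : IntegrableOn (fun p : ℝ × ℝ => h p.1 p.2 * Real.log (r p.1 p.2)) (UI ×ˢ UI) := by
    refine Integrable.bdd_mul (c := 1) hl hm.aestronglyMeasurable (.of_forall fun p => ?_)
    rw [Real.norm_of_nonneg (hh.2.2 _ _).1]
    exact (hh.2.2 _ _).2
  have i3 : IntegrableOn (fun p : ℝ × ℝ => (1 - h p.1 p.2) * Real.log (1 - r p.1 p.2))
      (UI ×ˢ UI) := by
    refine Integrable.bdd_mul (c := 1) hl' (hm.const_sub 1).aestronglyMeasurable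
      (.of_forall fun p => ?_)
    rw [Real.norm_of_nonneg (sub_nonneg.2 (hh.2.2 _ _).2)]
    linarith [(hh.2.2 p.1 p.2).1]
  refine IntegrableOn.congr_fun ((i1.neg.sub i2).sub i3) (fun p hp => ?_) measurableSet_square
  exact (relEnt_eq (hr01 _ hp.1 _ hp.2)).symm

lemma IsGraphon.const_mul {h : ℝ → ℝ → ℝ} (hh : IsGraphon h) {t : ℝ} (ht : t ∈ Icc (0 : ℝ) 1) :
    IsGraphon (fun x y => t * h x y) := by
  refine ⟨fun x y => congrArg (t * ·) (hh.1 x y), hh.2.1.const_mul t, fun x y => ?_⟩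
  exact ⟨mul_nonneg ht.1 (hh.2.2 x y).1, mul_le_one₀ ht.2 (hh.2.2 x y).1 (hh.2.2 x y).2⟩

/-- Convexity of `I_r` along the segment from the zero graphon to `h`. -/
lemma Ir_const_mul_le {r h : ℝ → ℝ → ℝ} (hr : GraphonAssump r) (hh : IsGraphon h) {t : ℝ}
    (ht : t ∈ Icc (0 : ℝ) 1) :
    Ir r (fun x y => t * h x y) ≤ t * Ir r h + (1 - t) * Ir r (fun _ _ => 0) := by
  have h0 : IsGraphon (fun _ _ => 0) := by
    simpa using hh.const_mul (left_mem_Icc.2 zero_le_one)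
  have i1 := (integrableOn_relEnt hr hh).const_mul t
  have i2 := (integrableOn_relEnt hr h0).const_mul (1 - t)
  unfold Ir
  rw [← integral_const_mul, ← integral_const_mul, ← integral_add i1 i2]
  exact setIntegral_mono_on (integrableOn_relEnt hr (hh.const_mul ht)) (i1.add i2)
    measurableSet_square
    fun p hp => relEnt_smul_le (hh.2.2 _ _) (hr.2.1 _ hp.1 _ hp.2) ht

lemma l2_const_mul {t : ℝ} (ht : 0 ≤ t) (u : ℝ → ℝ) : l2 (fun x => t * u x) = t * l2 u := by
  unfold l2
  simp only [mul_pow]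
  rw [integral_const_mul, Real.mul_rpow (sq_nonneg t) (integral_nonneg fun x => sq_nonneg _),
    ← Real.sqrt_eq_rpow, Real.sqrt_sq ht]

/-- Valid for every kernel `h`: the scaling law holds for `sSup` in `ℝ` even where its value is
the junk value `0`. -/
lemma lapNorm_const_mul {t : ℝ} (ht : 0 ≤ t) (h : ℝ → ℝ → ℝ) :
    lapNorm (fun x y => t * h x y) = t * lapNorm h := by
  have hL : ∀ u, l2 (lapApply (fun x y => t * h x y) u) = t * l2 (lapApply h u) := by
    intro u
    rw [← l2_const_mul ht]
    congr 1
    funext x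
    simp only [lapApply, mul_assoc]
    exact integral_const_mul _ _
  unfold lapNorm
  rw [← smul_eq_mul, ← Real.sSup_smul_of_nonneg ht]
  congr 1
  ext c
  simp only [mem_smul_set, mem_ofPred_eq, hL]
  constructor
  · rintro ⟨u, hu, hu1, rfl⟩
    exact ⟨_, ⟨u, hu, hu1, rfl⟩, rfl⟩
  · rintro ⟨_, ⟨u, hu, hu1, rfl⟩, rfl⟩
    exact ⟨u, hu, hu1, rfl⟩

lemma bddBelow_Ir {r : ℝ → ℝ → ℝ} (hr : GraphonAssump r) (P : (ℝ → ℝ → ℝ) → Prop) :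
    BddBelow {c | ∃ h, IsGraphon h ∧ P h ∧ c = Ir r h} := by
  refine ⟨∫ _ in UI ×ˢ UI, -Real.log 2, ?_⟩
  rintro _ ⟨h, hh, -, rfl⟩
  exact setIntegral_mono_on (integrableOn_const volume_square_lt_top.ne)
    (integrableOn_relEnt hr hh) measurableSet_square
    fun p hp => neg_log_two_le_relEnt (hh.2.2 _ _) (hr.2.1 _ hp.1 _ hp.2)

/-- **The infimum of `I_r` over `{‖L_h‖ < β}` equals that over `{‖L_h‖ ≤ β}`.** -/
theorem strict_vs_nonstrict_infimum
    (r : ℝ → ℝ → ℝ) (hr : GraphonAssump r) (β : ℝ) (hβ : 0 < β) :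
    sInf {c | ∃ h, IsGraphon h ∧ lapNorm h < β ∧ c = Ir r h}
      = sInf {c | ∃ h, IsGraphon h ∧ lapNorm h ≤ β ∧ c = Ir r h} := by
  have hsub : {c | ∃ h, IsGraphon h ∧ lapNorm h < β ∧ c = Ir r h} ⊆
      {c | ∃ h, IsGraphon h ∧ lapNorm h ≤ β ∧ c = Ir r h} := by
    rintro _ ⟨h, hh, hlt, rfl⟩
    exact ⟨h, hh, hlt.le, rfl⟩
  -- The zero graphon, written as `0 * r`, is a competitor for the strict problem.
  have hne : {c | ∃ h, IsGraphon h ∧ lapNorm h < β ∧ c = Ir r h}.Nonempty :=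
    ⟨_, _, hr.1.const_mul (left_mem_Icc.2 zero_le_one),
      by rwa [lapNorm_const_mul le_rfl, zero_mul], rfl⟩
  refine le_antisymm (le_csInf (hne.mono hsub) ?_)
    (csInf_le_csInf (bddBelow_Ir hr (fun h => lapNorm h ≤ β)) hne hsub)
  rintro _ ⟨h, hh, hle, rfl⟩
  have hlim : Tendsto (fun t : ℝ => t * Ir r h + (1 - t) * Ir r (fun _ _ => 0))
      (nhdsWithin 1 (Iio 1)) (nhds (Ir r h)) := by
    have hc : Continuous (fun t : ℝ => t * Ir r h + (1 - t) * Ir r (fun _ _ => 0)) := by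
      fun_prop
    simpa using (hc.tendsto 1).mono_left nhdsWithin_le_nhds
  refine ge_of_tendsto hlim ?_
  filter_upwards [Ioo_mem_nhdsLT (zero_lt_one' ℝ)] with t ht
  have ht' : t ∈ Icc (0 : ℝ) 1 := Ioo_subset_Icc_self ht
  refine (csInf_le (bddBelow_Ir hr (fun h => lapNorm h < β))
    ⟨_, hh.const_mul ht', ?_, rfl⟩).trans (Ir_const_mul_le hr hh ht')
  rw [lapNorm_const_mul ht.1.le]
  calc t * lapNorm h ≤ t * β := mul_le_mul_of_nonneg_left hle ht.1.le
    _ < β := mul_lt_of_lt_one_left hβ ht.2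
end
end

section
/- Let r be a graphon with r₋ ≤ r(x,y) ≤ r₊ for all (x,y) and some 0 < r₋ ≤ r₊ < 1, and fix x ∈ [0,1]. Then β ↦ J_r(x,β) is real-analytic on (0,1); its first derivative satisfies ∂J_r/∂β (x,β) = θ(x,β), where θ(x,β) is the unique θ ∈ ℝ with ∫₀¹ e^θ r(x,y) / (e^θ r(x,y) + 1 − r(x,y)) dy = β; its second derivative satisfies ∂²J_r/∂β² (x,β) = ( ∫₀¹ r̂_β(x,y)(1 − r̂_β(x,y)) dy )^{-1}, where r̂_β(x,y) = e^{θ(x,β)} r(x,y) / (e^{θ(x,β)} r(x,y) + 1 − r(x,y)); and for every ε > 0 and every k ≥ 1, sup{ |∂^k J_r/∂β^k (x,β)| : x ∈ [0,1], β ∈ [ε, 1−ε] } < ∞. -/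
/-!
The function `Λ = Λ_r(x, ·)` extends holomorphically to a neighbourhood of the real line
(`hasDerivAt_LamC`), so it is real-analytic, and `Λ' = m` is the tilted mean degree. The kernel
satisfies `∂r̂/∂θ = r̂(1 - r̂)`, so `m' = V`, the tilted variance, is positive. Moreover `m` comes
arbitrarily close to `0` and `1`, so it is an increasing bijection onto `(0,1)`. By the analytic
inverse function theorem its inverse `β ↦ θ(β)` is analytic with derivative `1/V(θ(β))`. The concave
function `θ ↦ θβ - Λ(θ)` is maximal at `θ(β)`, so `J(β) = θ(β)β - Λ(θ(β))` (`Jfun_eq`), which is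
analytic with `J' = θ(β)` and `J'' = 1/V(θ(β))`.

For the uniform bounds, each `∂ᵏJ/∂βᵏ` with `k ≥ 1` is `F(x, θ(x,β))` with `F` in the algebra
`DerivAlg` generated by `θ`, the integrals of polynomials in `r̂`, and `1/V`
(`iteratedDeriv_Jfun`). This algebra is closed under `∂/∂θ`, and its members are bounded on
`|θ| ≤ M` uniformly in `x`, because `r̂ ∈ [0,1]` and `V` is bounded below there. Finally,
`β ∈ [ε, 1-ε]` confines `θ(x,β)` to an interval independent of `x` (`theta_bounds`).
-/

open MeasureTheory Filter Set
open scoped BigOperators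

noncomputable section

/-- `∫ p(r̂_θ(x,y)) dy`: the mean of a polynomial in the tilted kernel. -/
def polyMoment (r : ℝ → ℝ → ℝ) (p : Polynomial ℝ) (x θ : ℝ) : ℝ :=
  ∫ y in UI, p.eval (tilt r θ x y)

/-- The tilted variance `∫ r̂_θ (1 - r̂_θ) dy`. -/
def tiltVar (r : ℝ → ℝ → ℝ) (x θ : ℝ) : ℝ :=
  ∫ y in UI, tilt r θ x y * (1 - tilt r θ x y)

/-- An inverse of `θ ↦ degMoment r x θ`; it takes junk values outside the range, which is
`(0,1)`. -/
def thetaInv (r : ℝ → ℝ → ℝ) (x : ℝ) : ℝ → ℝ := Function.invFun (degMoment r x)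

/-! ### Elementary estimates on the tilted kernel -/

lemma den_pos {a θ : ℝ} (h0 : 0 < a) (h1 : a < 1) : 0 < Real.exp θ * a + 1 - a := by
  have := mul_pos (Real.exp_pos θ) h0
  linarith

lemma tilt_mem {r : ℝ → ℝ → ℝ} {θ x y : ℝ} (h0 : 0 < r x y) (h1 : r x y < 1) :
    tilt r θ x y ∈ Set.Icc (0:ℝ) 1 := by
  have hd := den_pos (θ := θ) h0 h1
  have := mul_pos (Real.exp_pos θ) h0
  unfold tilt
  exact ⟨by positivity, (div_le_one hd).2 (by linarith)⟩

lemma one_sub_tilt {r : ℝ → ℝ → ℝ} {θ x y : ℝ} (h0 : 0 < r x y) (h1 : r x y < 1) :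
    1 - tilt r θ x y = (1 - r x y) / (Real.exp θ * r x y + 1 - r x y) := by
  have hd := (den_pos (θ := θ) h0 h1).ne'
  unfold tilt
  field_simp
  ring

lemma hasDerivAt_tilt {r : ℝ → ℝ → ℝ} {θ x y : ℝ} (h0 : 0 < r x y) (h1 : r x y < 1) :
    HasDerivAt (fun t => tilt r t x y) (tilt r θ x y * (1 - tilt r θ x y)) θ := by
  have hd := (den_pos (θ := θ) h0 h1).ne'
  have hn : HasDerivAt (fun t => Real.exp t * r x y) (Real.exp θ * r x y) θ :=
    (Real.hasDerivAt_exp θ).mul_const _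
  have := hn.div ((hn.add_const 1).sub_const (r x y)) hd
  rw [one_sub_tilt h0 h1]
  refine this.congr_deriv ?_
  unfold tilt
  field_simp
  ring

lemma tilt_le {r : ℝ → ℝ → ℝ} {θ x y rp : ℝ} (h0 : 0 < r x y) (hp : r x y ≤ rp) (h1 : rp < 1) :
    tilt r θ x y ≤ Real.exp θ / (1 - rp) := by
  have he := Real.exp_pos θ
  unfold tilt
  apply div_le_div₀ he.le _ (by linarith)
  · have := mul_pos he h0
    linarith
  · nlinarith

lemma one_sub_tilt_le {r : ℝ → ℝ → ℝ} {θ x y rm : ℝ} (h0 : 0 < rm) (hm : rm ≤ r x y)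
    (h1 : r x y < 1) : 1 - tilt r θ x y ≤ Real.exp (-θ) / rm := by
  have he := Real.exp_pos θ
  rw [one_sub_tilt (h0.trans_le hm) h1, Real.exp_neg, inv_eq_one_div, div_div]
  apply div_le_div₀ zero_le_one _ (by positivity)
  · nlinarith
  · linarith

lemma tilt_var_ge {r : ℝ → ℝ → ℝ} {θ x y rm rp M : ℝ} (h0 : 0 < rm) (hm : rm ≤ r x y)
    (hp : r x y ≤ rp) (h1 : rp < 1) (hM : |θ| ≤ M) :
    Real.exp (-M) * rm * (1 - rp) / (Real.exp M + 1) ^ 2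
      ≤ tilt r θ x y * (1 - tilt r θ x y) := by
  have hr0 := h0.trans_le hm
  have hr1 := hp.trans_lt h1
  have hd := den_pos (θ := θ) hr0 hr1
  rw [one_sub_tilt hr0 hr1]
  unfold tilt
  rw [div_mul_div_comm, ← sq]
  have e1 : Real.exp (-M) ≤ Real.exp θ := Real.exp_le_exp.2 (abs_le.1 hM).1
  have e2 : Real.exp θ ≤ Real.exp M := Real.exp_le_exp.2 (abs_le.1 hM).2
  have e0 := Real.exp_pos θ
  have : (0:ℝ) ≤ 1 - rp := by linarith
  have : (0:ℝ) ≤ 1 - r x y := by linarith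
  apply div_le_div₀ (by positivity) _ (by positivity)
  · gcongr
    nlinarith
  · gcongr

/-! ### Integrals over the second variable -/

lemma BoundedGraphon.pos {r : ℝ → ℝ → ℝ} {rm rp : ℝ} (hb : BoundedGraphon r rm rp) {x y : ℝ}
    (hx : x ∈ UI) (hy : y ∈ UI) : 0 < r x y := hb.2.1.trans_le (hb.2.2.2.2 x hx y hy).1

lemma BoundedGraphon.lt_one {r : ℝ → ℝ → ℝ} {rm rp : ℝ} (hb : BoundedGraphon r rm rp) {x y : ℝ}
    (hx : x ∈ UI) (hy : y ∈ UI) : r x y < 1 := (hb.2.2.2.2 x hx y hy).2.trans_lt hb.2.2.2.1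

lemma BoundedGraphon.meas {r : ℝ → ℝ → ℝ} {rm rp : ℝ} (hb : BoundedGraphon r rm rp) (x : ℝ) :
    Measurable (fun y => r x y) := hb.1.2.1.comp measurable_prodMk_left

lemma measurable_tilt {r : ℝ → ℝ → ℝ} {rm rp : ℝ} (hb : BoundedGraphon r rm rp) (θ x : ℝ) :
    Measurable (fun y => tilt r θ x y) := by
  have := hb.meas x
  unfold tilt
  fun_prop

lemma measurableSet_UI : MeasurableSet UI := measurableSet_Icc

instance : IsProbabilityMeasure (volume.restrict UI) :=
  ⟨by simp [UI]⟩

lemma ae_UI {p : ℝ → Prop} (h : ∀ y ∈ UI, p y) : ∀ᵐ y ∂(volume.restrict UI), p y :=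
  (ae_restrict_iff' measurableSet_UI).2 (Eventually.of_forall h)

lemma integrableOn_of_le {E : Type*} [NormedAddCommGroup E] [MeasurableSpace E] [BorelSpace E]
    [SecondCountableTopology E] {f : ℝ → E} (hf : Measurable f) {C : ℝ}
    (h : ∀ y ∈ UI, ‖f y‖ ≤ C) : IntegrableOn f UI :=
  Integrable.of_bound hf.aestronglyMeasurable C (ae_UI h)

lemma integral_le_const {f : ℝ → ℝ} {C : ℝ} (hf : IntegrableOn f UI)
    (h : ∀ y ∈ UI, f y ≤ C) : ∫ y in UI, f y ≤ C := by
  have := setIntegral_mono_on hf (integrable_const C) measurableSet_UI h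
  simpa using this

lemma const_le_integral {f : ℝ → ℝ} {C : ℝ} (hf : IntegrableOn f UI)
    (h : ∀ y ∈ UI, C ≤ f y) : C ≤ ∫ y in UI, f y := by
  have := setIntegral_mono_on (integrable_const C) hf measurableSet_UI h
  simpa using this

lemma exists_eval_bound (p : Polynomial ℝ) : ∃ C, ∀ t ∈ Set.Icc (0:ℝ) 1, ‖p.eval t‖ ≤ C :=
  isCompact_Icc.exists_bound_of_continuousOn p.continuous.continuousOn

lemma integrableOn_eval_tilt {r : ℝ → ℝ → ℝ} {rm rp : ℝ} (hb : BoundedGraphon r rm rp)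
    (p : Polynomial ℝ) {x : ℝ} (hx : x ∈ UI) (θ : ℝ) :
    IntegrableOn (fun y => p.eval (tilt r θ x y)) UI := by
  obtain ⟨C, hC⟩ := exists_eval_bound p
  exact integrableOn_of_le (p.continuous.measurable.comp (measurable_tilt hb θ x))
    fun y hy => hC _ (tilt_mem (hb.pos hx hy) (hb.lt_one hx hy))

/-- Since `∂r̂/∂θ = r̂(1 - r̂)`, differentiating a polynomial moment gives another one. -/
lemma hasDerivAt_polyMoment {r : ℝ → ℝ → ℝ} {rm rp : ℝ} (hb : BoundedGraphon r rm rp)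
    (p : Polynomial ℝ) {x : ℝ} (hx : x ∈ UI) (θ : ℝ) :
    HasDerivAt (polyMoment r p x)
      (polyMoment r (p.derivative * (Polynomial.X * (1 - Polynomial.X))) x θ) θ := by
  obtain ⟨C, hC⟩ := exists_eval_bound (p.derivative * (Polynomial.X * (1 - Polynomial.X)))
  refine (hasDerivAt_integral_of_dominated_loc_of_deriv_le (μ := volume.restrict UI)
    (F := fun t y => p.eval (tilt r t x y)) (s := univ) (bound := fun _ => C)
    (F' := fun t y =>
      (p.derivative * (Polynomial.X * (1 - Polynomial.X))).eval (tilt r t x y))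
    univ_mem (Eventually.of_forall fun t => ?_) (integrableOn_eval_tilt hb p hx θ) ?_ ?_
    (integrable_const C) ?_).2
  · exact (integrableOn_eval_tilt hb p hx t).aestronglyMeasurable
  · exact (integrableOn_eval_tilt hb _ hx θ).aestronglyMeasurable
  · exact ae_UI fun y hy t _ => hC _ (tilt_mem (hb.pos hx hy) (hb.lt_one hx hy))
  · refine ae_UI fun y hy t _ => ?_
    have := (p.hasDerivAt (tilt r t x y)).comp t
      (hasDerivAt_tilt (θ := t) (hb.pos hx hy) (hb.lt_one hx hy))
    refine HasDerivAt.congr_deriv this ?_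
    simp

lemma degMoment_eq (r : ℝ → ℝ → ℝ) (x : ℝ) :
    degMoment r x = polyMoment r Polynomial.X x := by
  ext θ; simp [degMoment, polyMoment]

lemma tiltVar_eq (r : ℝ → ℝ → ℝ) (x : ℝ) :
    tiltVar r x = polyMoment r (Polynomial.X * (1 - Polynomial.X)) x := by
  ext θ; simp [tiltVar, polyMoment]

lemma hasDerivAt_degMoment {r : ℝ → ℝ → ℝ} {rm rp : ℝ} (hb : BoundedGraphon r rm rp)
    {x : ℝ} (hx : x ∈ UI) (θ : ℝ) : HasDerivAt (degMoment r x) (tiltVar r x θ) θ := by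
  have := hasDerivAt_polyMoment hb Polynomial.X hx θ
  rw [degMoment_eq, tiltVar_eq]
  simpa using this

lemma tiltVar_ge {r : ℝ → ℝ → ℝ} {rm rp : ℝ} (hb : BoundedGraphon r rm rp)
    {x : ℝ} (hx : x ∈ UI) {θ M : ℝ} (hM : |θ| ≤ M) :
    Real.exp (-M) * rm * (1 - rp) / (Real.exp M + 1) ^ 2 ≤ tiltVar r x θ := by
  refine const_le_integral ?_ fun y hy =>
    tilt_var_ge hb.2.1 (hb.2.2.2.2 x hx y hy).1 (hb.2.2.2.2 x hx y hy).2 hb.2.2.2.1 hM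
  have := integrableOn_eval_tilt hb (Polynomial.X * (1 - Polynomial.X)) hx θ
  simpa only [Polynomial.eval_mul, Polynomial.eval_sub, Polynomial.eval_one, Polynomial.eval_X]
    using this

lemma varBound_pos {r : ℝ → ℝ → ℝ} {rm rp : ℝ} (hb : BoundedGraphon r rm rp) (M : ℝ) :
    0 < Real.exp (-M) * rm * (1 - rp) / (Real.exp M + 1) ^ 2 := by
  have h0 := hb.2.1
  have : 0 < 1 - rp := by linarith [hb.2.2.2.1]
  positivity

lemma tiltVar_pos {r : ℝ → ℝ → ℝ} {rm rp : ℝ} (hb : BoundedGraphon r rm rp)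
    {x : ℝ} (hx : x ∈ UI) (θ : ℝ) : 0 < tiltVar r x θ :=
  (varBound_pos hb _).trans_le (tiltVar_ge hb hx le_rfl)

lemma integrableOn_tilt {r : ℝ → ℝ → ℝ} {rm rp : ℝ} (hb : BoundedGraphon r rm rp)
    {x : ℝ} (hx : x ∈ UI) (θ : ℝ) : IntegrableOn (fun y => tilt r θ x y) UI := by
  simpa using integrableOn_eval_tilt hb Polynomial.X hx θ

/-! ### The inverse function `θ(x, ·)` -/

lemma degMoment_strictMono {r : ℝ → ℝ → ℝ} {rm rp : ℝ} (hb : BoundedGraphon r rm rp)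
    {x : ℝ} (hx : x ∈ UI) : StrictMono (degMoment r x) :=
  strictMono_of_deriv_pos fun θ => by
    rw [(hasDerivAt_degMoment hb hx θ).deriv]; exact tiltVar_pos hb hx θ

lemma degMoment_le {r : ℝ → ℝ → ℝ} {rm rp : ℝ} (hb : BoundedGraphon r rm rp)
    {x : ℝ} (hx : x ∈ UI) (θ : ℝ) : degMoment r x θ ≤ Real.exp θ / (1 - rp) :=
  integral_le_const (integrableOn_tilt hb hx θ) fun y hy =>
    tilt_le (hb.pos hx hy) (hb.2.2.2.2 x hx y hy).2 hb.2.2.2.1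

lemma one_sub_degMoment_le {r : ℝ → ℝ → ℝ} {rm rp : ℝ} (hb : BoundedGraphon r rm rp)
    {x : ℝ} (hx : x ∈ UI) (θ : ℝ) : 1 - degMoment r x θ ≤ Real.exp (-θ) / rm := by
  have := const_le_integral (C := 1 - Real.exp (-θ) / rm) (integrableOn_tilt hb hx θ)
    fun y hy => by
      linarith [one_sub_tilt_le (θ := θ) hb.2.1 (hb.2.2.2.2 x hx y hy).1 (hb.lt_one hx hy)]
  unfold degMoment
  linarith

/-- Bounds on `θ(x,β)` that do not depend on `x`. -/
lemma theta_bounds {r : ℝ → ℝ → ℝ} {rm rp : ℝ} (hb : BoundedGraphon r rm rp)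
    {x : ℝ} (hx : x ∈ UI) {θ ε : ℝ} (hε : 0 < ε) (h : degMoment r x θ ∈ Set.Icc ε (1 - ε)) :
    Real.log (ε * (1 - rp)) ≤ θ ∧ θ ≤ -Real.log (ε * rm) := by
  have hp : 0 < 1 - rp := by linarith [hb.2.2.2.1]
  have hm := hb.2.1
  have h1 := degMoment_le hb hx θ
  have h2 := one_sub_degMoment_le hb hx θ
  rw [le_div_iff₀ hp] at h1
  rw [le_div_iff₀ hm] at h2
  constructor
  · rw [Real.log_le_iff_le_exp (by positivity)]
    nlinarith [h.1]
  · rw [le_neg, Real.log_le_iff_le_exp (by positivity)]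
    nlinarith [h.2]

lemma exists_degMoment_eq {r : ℝ → ℝ → ℝ} {rm rp : ℝ} (hb : BoundedGraphon r rm rp)
    {x : ℝ} (hx : x ∈ UI) {β : ℝ} (hβ : β ∈ Set.Ioo (0:ℝ) 1) : ∃ θ, degMoment r x θ = β := by
  have hp : 0 < 1 - rp := by linarith [hb.2.2.2.1]
  have hm := hb.2.1
  have hβ' : 0 < 1 - β := by linarith [hβ.2]
  have hβ0 := hβ.1
  refine mem_range_of_exists_le_of_exists_ge
    (continuous_iff_continuousAt.2 fun θ => (hasDerivAt_degMoment hb hx θ).continuousAt)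
    ⟨Real.log (β * (1 - rp)), ?_⟩ ⟨-Real.log ((1 - β) * rm), ?_⟩
  · refine (degMoment_le hb hx _).trans_eq ?_
    rw [Real.exp_log (by positivity)]
    field_simp
  · have := one_sub_degMoment_le hb hx (-Real.log ((1 - β) * rm))
    rw [neg_neg, Real.exp_log (by positivity), mul_div_cancel_right₀ _ hm.ne'] at this
    linarith

lemma degMoment_thetaInv {r : ℝ → ℝ → ℝ} {rm rp : ℝ} (hb : BoundedGraphon r rm rp)
    {x : ℝ} (hx : x ∈ UI) {β : ℝ} (hβ : β ∈ Set.Ioo (0:ℝ) 1) :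
    degMoment r x (thetaInv r x β) = β :=
  Function.invFun_eq (exists_degMoment_eq hb hx hβ)

lemma thetaInv_degMoment {r : ℝ → ℝ → ℝ} {rm rp : ℝ} (hb : BoundedGraphon r rm rp)
    {x : ℝ} (hx : x ∈ UI) (θ : ℝ) : thetaInv r x (degMoment r x θ) = θ :=
  Function.leftInverse_invFun (degMoment_strictMono hb hx).injective θ

/-! ### Analyticity of the cumulant generating function -/

/-- The holomorphic extension of `Λ_r(x, ·)` to the strip `|Im z| < 1`. -/
def LamC (r : ℝ → ℝ → ℝ) (x : ℝ) (z : ℂ) : ℂ :=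
  ∫ y in UI, Complex.log ((r x y : ℂ) * Complex.exp z + 1 - (r x y : ℂ))

lemma re_exp_nonneg {z : ℂ} (hz : |z.im| < 1) : 0 ≤ (Complex.exp z).re := by
  rw [Complex.exp_re]
  have : 0 ≤ Real.cos z.im := Real.cos_nonneg_of_mem_Icc
    ⟨by linarith [(abs_lt.1 hz).1, Real.pi_gt_three], by linarith [(abs_lt.1 hz).2, Real.pi_gt_three]⟩
  positivity

lemma re_denC {a rp : ℝ} {z : ℂ} (h0 : 0 < a) (hp : a ≤ rp) (hz : |z.im| < 1) :
    1 - rp ≤ ((a : ℂ) * Complex.exp z + 1 - (a : ℂ)).re := by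
  have := mul_nonneg h0.le (re_exp_nonneg hz)
  simp only [Complex.sub_re, Complex.add_re, Complex.re_ofReal_mul, Complex.one_re,
    Complex.ofReal_re]
  linarith

/-- For `|Im z| < 1` the argument of the logarithm has real part at least `1 - rp > 0`, so the
principal branch is holomorphic there and its derivative in `z` is locally bounded uniformly in `y`,
which permits differentiation under the integral. -/
lemma hasDerivAt_LamC {r : ℝ → ℝ → ℝ} {rm rp : ℝ} (hb : BoundedGraphon r rm rp)
    {x : ℝ} (hx : x ∈ UI) (z : ℂ) (hz : |z.im| < 1) :
    HasDerivAt (LamC r x) (∫ y in UI, (r x y : ℂ) * Complex.exp z /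
      ((r x y : ℂ) * Complex.exp z + 1 - (r x y : ℂ))) z := by
  have hp : 0 < 1 - rp := by linarith [hb.2.2.2.1]
  have hmeas := hb.meas x
  let s : Set ℂ := {w | |w.im| < 1} ∩ {w | w.re < z.re + 1}
  have hs : s ∈ nhds z := by
    refine IsOpen.mem_nhds (IsOpen.inter ?_ ?_) ⟨hz, by simp⟩
    · exact isOpen_lt (by fun_prop) (by fun_prop)
    · exact isOpen_lt (by fun_prop) (by fun_prop)
  have hre : ∀ y ∈ UI, ∀ w ∈ s,
      1 - rp ≤ ((r x y : ℂ) * Complex.exp w + 1 - (r x y : ℂ)).re := fun y hy w hw =>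
    re_denC (hb.pos hx hy) (hb.2.2.2.2 x hx y hy).2 hw.1
  refine (hasDerivAt_integral_of_dominated_loc_of_deriv_le (s := s)
    (bound := fun _ => Real.exp (z.re + 1) / (1 - rp))
    (F' := fun w y => (r x y : ℂ) * Complex.exp w /
      ((r x y : ℂ) * Complex.exp w + 1 - (r x y : ℂ)))
    hs (Eventually.of_forall fun t => ?_) ?_ ?_ ?_ (integrable_const _) ?_).2
  · exact Measurable.aestronglyMeasurable (by fun_prop)
  -- For fixed `z` the integrand is a continuous function of `r x y ∈ [rm, rp]`, hence bounded.
  · have hc : ContinuousOn (fun a : ℝ => Complex.log ((a : ℂ) * Complex.exp z + 1 - (a : ℂ)))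
        (Set.Icc rm rp) := by
      refine ContinuousOn.clog (by fun_prop) fun a ha => Or.inl ?_
      exact hp.trans_le (re_denC (hb.2.1.trans_le ha.1) ha.2 hz)
    obtain ⟨C, hC⟩ := isCompact_Icc.exists_bound_of_continuousOn hc
    exact integrableOn_of_le (by fun_prop) fun y hy => hC _ (hb.2.2.2.2 x hx y hy)
  · exact Measurable.aestronglyMeasurable (by fun_prop)
  · refine ae_UI fun y hy w hw => ?_
    have h0 := hb.pos hx hy
    have h1 := hb.lt_one hx hy
    rw [norm_div]
    apply div_le_div₀ (Real.exp_pos _).le _ hp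
    · exact (hre y hy w hw).trans (Complex.re_le_norm _)
    · rw [norm_mul, Complex.norm_exp, Complex.norm_real, Real.norm_eq_abs, abs_of_pos h0]
      have : Real.exp w.re ≤ Real.exp (z.re + 1) := Real.exp_le_exp.2 hw.2.le
      nlinarith [Real.exp_pos w.re]
  · refine ae_UI fun y hy w hw => ?_
    have hd : HasDerivAt (fun w => (r x y : ℂ) * Complex.exp w + 1 - (r x y : ℂ))
        ((r x y : ℂ) * Complex.exp w) w :=
      (((Complex.hasDerivAt_exp w).const_mul _).add_const _).sub_const _
    exact hd.clog (Or.inl (hp.trans_le (hre y hy w hw)))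

lemma LamC_ofReal {r : ℝ → ℝ → ℝ} {rm rp : ℝ} (hb : BoundedGraphon r rm rp)
    {x : ℝ} (hx : x ∈ UI) (θ : ℝ) : LamC r x θ = (Lam r x θ : ℝ) := by
  unfold LamC Lam
  rw [← integral_complex_ofReal]
  refine setIntegral_congr_fun measurableSet_UI fun y hy => ?_
  have := den_pos (θ := θ) (hb.pos hx hy) (hb.lt_one hx hy)
  rw [Complex.ofReal_log (by linarith)]
  push_cast
  rfl

lemma analyticAt_Lam {r : ℝ → ℝ → ℝ} {rm rp : ℝ} (hb : BoundedGraphon r rm rp)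
    {x : ℝ} (hx : x ∈ UI) (θ : ℝ) : AnalyticAt ℝ (Lam r x) θ := by
  have hs : IsOpen {w : ℂ | |w.im| < 1} := isOpen_lt (by fun_prop) (by fun_prop)
  have hd : DifferentiableOn ℂ (LamC r x) {w : ℂ | |w.im| < 1} := fun z hz =>
    (hasDerivAt_LamC hb hx z hz).differentiableAt.differentiableWithinAt
  have := (hd.analyticAt (z := (θ : ℂ)) (hs.mem_nhds (by simp))).re_ofReal
  simpa [LamC_ofReal hb hx] using this

lemma hasDerivAt_Lam {r : ℝ → ℝ → ℝ} {rm rp : ℝ} (hb : BoundedGraphon r rm rp)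
    {x : ℝ} (hx : x ∈ UI) (θ : ℝ) : HasDerivAt (Lam r x) (degMoment r x θ) θ := by
  have := (hasDerivAt_LamC hb hx θ (by simp)).real_of_complex
  simp only [LamC_ofReal hb hx, Complex.ofReal_re] at this
  convert this using 1
  rw [degMoment, ← Complex.ofReal_re (∫ y in UI, tilt r θ x y), ← integral_complex_ofReal]
  congr 2
  ext y
  simp [tilt, mul_comm]

lemma analyticAt_degMoment {r : ℝ → ℝ → ℝ} {rm rp : ℝ} (hb : BoundedGraphon r rm rp)
    {x : ℝ} (hx : x ∈ UI) (θ : ℝ) : AnalyticAt ℝ (degMoment r x) θ := by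
  have h := (analyticAt_Lam hb hx θ).deriv
  rwa [show deriv (Lam r x) = degMoment r x from
    funext fun t => (hasDerivAt_Lam hb hx t).deriv] at h

lemma analyticAt_thetaInv {r : ℝ → ℝ → ℝ} {rm rp : ℝ} (hb : BoundedGraphon r rm rp)
    {x : ℝ} (hx : x ∈ UI) {β : ℝ} (hβ : β ∈ Set.Ioo (0:ℝ) 1) :
    AnalyticAt ℝ (thetaInv r x) β := by
  obtain ⟨θ, rfl⟩ := exists_degMoment_eq hb hx hβ
  have ha := analyticAt_degMoment hb hx θ
  have hd : deriv (degMoment r x) θ ≠ 0 := by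
    rw [(hasDerivAt_degMoment hb hx θ).deriv]; exact (tiltVar_pos hb hx θ).ne'
  refine (ha.analyticAt_localInverse hd).congr ?_
  exact EventuallyEq.symm ((ha.hasStrictDerivAt.hasStrictFDerivAt_equiv hd).localInverse_unique
    (Eventually.of_forall fun t => thetaInv_degMoment hb hx t))

lemma hasDerivAt_thetaInv {r : ℝ → ℝ → ℝ} {rm rp : ℝ} (hb : BoundedGraphon r rm rp)
    {x : ℝ} (hx : x ∈ UI) {β : ℝ} (hβ : β ∈ Set.Ioo (0:ℝ) 1) :
    HasDerivAt (thetaInv r x) (tiltVar r x (thetaInv r x β))⁻¹ β := by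
  obtain ⟨θ, rfl⟩ := exists_degMoment_eq hb hx hβ
  rw [thetaInv_degMoment hb hx]
  have hs := (analyticAt_degMoment hb hx θ).hasStrictDerivAt
  rw [(hasDerivAt_degMoment hb hx θ).deriv] at hs
  exact (hs.to_local_left_inverse (tiltVar_pos hb hx θ).ne'
    (Eventually.of_forall fun t => thetaInv_degMoment hb hx t)).hasDerivAt

/-! ### The Legendre transform -/

/-- The supremum defining `J_r(x,β)` is attained at the solution of `degMoment r x θ = β`. -/
lemma Jfun_eq {r : ℝ → ℝ → ℝ} {rm rp : ℝ} (hb : BoundedGraphon r rm rp)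
    {x : ℝ} (hx : x ∈ UI) {β θ : ℝ} (h : degMoment r x θ = β) :
    Jfun r x β = θ * β - Lam r x θ := by
  have hd : ∀ t, HasDerivAt (fun t => t * β - Lam r x t) (β - degMoment r x t) t := fun t => by
    simpa using ((hasDerivAt_id' t).mul_const β).fun_sub (hasDerivAt_Lam hb hx t)
  have hc : Continuous (fun t => t * β - Lam r x t) :=
    continuous_iff_continuousAt.2 fun t => (hd t).continuousAt
  have hdiff : Differentiable ℝ (fun t => t * β - Lam r x t) := fun t => (hd t).differentiableAt
  have hmono := (degMoment_strictMono hb hx).monotone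
  have hle : ∀ t, t * β - Lam r x t ≤ θ * β - Lam r x θ := by
    intro t
    rcases le_total t θ with ht | ht
    · refine monotoneOn_of_deriv_nonneg (convex_Iic θ) hc.continuousOn hdiff.differentiableOn
        (fun s hs => ?_) (mem_Iic.2 ht) (mem_Iic.2 le_rfl) ht
      rw [(hd s).deriv]
      have := hmono (interior_subset hs : s ∈ Iic θ)
      linarith
    · refine antitoneOn_of_deriv_nonpos (convex_Ici θ) hc.continuousOn hdiff.differentiableOn
        (fun s hs => ?_) (mem_Ici.2 le_rfl) (mem_Ici.2 ht) ht
      rw [(hd s).deriv]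
      have := hmono (interior_subset hs : s ∈ Ici θ)
      linarith
  exact le_antisymm (ciSup_le hle)
    (le_ciSup (f := fun t => t * β - Lam r x t) ⟨_, forall_mem_range.2 hle⟩ θ)

lemma Jfun_eventuallyEq {r : ℝ → ℝ → ℝ} {rm rp : ℝ} (hb : BoundedGraphon r rm rp)
    {x : ℝ} (hx : x ∈ UI) {β : ℝ} (hβ : β ∈ Set.Ioo (0:ℝ) 1) :
    (fun b => Jfun r x b) =ᶠ[nhds β] fun b => thetaInv r x b * b - Lam r x (thetaInv r x b) := by
  filter_upwards [isOpen_Ioo.mem_nhds hβ] with b hb'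
  exact Jfun_eq hb hx (degMoment_thetaInv hb hx hb')

lemma hasDerivAt_Jfun {r : ℝ → ℝ → ℝ} {rm rp : ℝ} (hb : BoundedGraphon r rm rp)
    {x : ℝ} (hx : x ∈ UI) {β : ℝ} (hβ : β ∈ Set.Ioo (0:ℝ) 1) :
    HasDerivAt (fun b => Jfun r x b) (thetaInv r x β) β := by
  have ht := hasDerivAt_thetaInv hb hx hβ
  have h := (ht.mul (hasDerivAt_id β)).sub
    ((hasDerivAt_Lam hb hx (thetaInv r x β)).comp β ht)
  refine (h.congr_of_eventuallyEq (Jfun_eventuallyEq hb hx hβ)).congr_deriv ?_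
  rw [degMoment_thetaInv hb hx hβ]
  simp only [id]
  ring

/-! ### Uniform bounds on the higher derivatives -/

/-- The functions `(x, θ) ↦ F x θ` that can occur as `∂ᵏJ/∂βᵏ` in terms of `θ = θ(x,β)`: the algebra
generated by `θ` itself, the polynomial moments and the inverse of the tilted variance. -/
inductive DerivAlg (r : ℝ → ℝ → ℝ) : (ℝ → ℝ → ℝ) → Prop
  | theta : DerivAlg r (fun _ θ => θ)
  | moment (p : Polynomial ℝ) : DerivAlg r (polyMoment r p)
  | invVar : DerivAlg r (fun x θ => (tiltVar r x θ)⁻¹)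
  | add {F G : ℝ → ℝ → ℝ} : DerivAlg r F → DerivAlg r G → DerivAlg r (fun x θ => F x θ + G x θ)
  | mul {F G : ℝ → ℝ → ℝ} : DerivAlg r F → DerivAlg r G → DerivAlg r (fun x θ => F x θ * G x θ)

lemma DerivAlg.exists_deriv {r : ℝ → ℝ → ℝ} {rm rp : ℝ} (hb : BoundedGraphon r rm rp)
    {F : ℝ → ℝ → ℝ} (hF : DerivAlg r F) :
    ∃ F', DerivAlg r F' ∧ ∀ x ∈ UI, ∀ θ, HasDerivAt (F x) (F' x θ) θ := by
  induction hF with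
  | theta =>
    exact ⟨_, .moment 1, fun x _ θ => by simpa [polyMoment] using hasDerivAt_id' θ⟩
  | moment p => exact ⟨_, .moment _, fun x hx θ => hasDerivAt_polyMoment hb p hx θ⟩
  | invVar =>
    refine ⟨_, .mul (.moment (-(Polynomial.derivative (Polynomial.X * (1 - Polynomial.X)) *
      (Polynomial.X * (1 - Polynomial.X))))) (.mul .invVar .invVar), fun x hx θ => ?_⟩
    have hV := hasDerivAt_polyMoment hb (Polynomial.X * (1 - Polynomial.X)) hx θ
    rw [← tiltVar_eq] at hV
    refine (hV.fun_inv (tiltVar_pos hb hx θ).ne').congr_deriv ?_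
    have hneg : ∀ q : Polynomial ℝ, polyMoment r (-q) x θ = -polyMoment r q x θ := fun q => by
      simp [polyMoment, integral_neg]
    rw [hneg, div_eq_mul_inv, sq, mul_inv]
  | add _ _ hF hG =>
    obtain ⟨F', hF', hF⟩ := hF
    obtain ⟨G', hG', hG⟩ := hG
    exact ⟨_, hF'.add hG', fun x hx θ => (hF x hx θ).add (hG x hx θ)⟩
  | mul hF₀ hG₀ hF hG =>
    obtain ⟨F', hF', hF⟩ := hF
    obtain ⟨G', hG', hG⟩ := hG
    exact ⟨_, (hF'.mul hG₀).add (hF₀.mul hG'), fun x hx θ => (hF x hx θ).mul (hG x hx θ)⟩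

lemma DerivAlg.exists_bound {r : ℝ → ℝ → ℝ} {rm rp : ℝ} (hb : BoundedGraphon r rm rp)
    {F : ℝ → ℝ → ℝ} (hF : DerivAlg r F) (M : ℝ) :
    ∃ C, ∀ x ∈ UI, ∀ θ, |θ| ≤ M → |F x θ| ≤ C := by
  induction hF with
  | theta => exact ⟨M, fun _ _ _ h => h⟩
  | moment p =>
    obtain ⟨C, hC⟩ := exists_eval_bound p
    refine ⟨C, fun x hx θ _ => ?_⟩
    have := norm_integral_le_of_norm_le_const (μ := volume.restrict UI)
      (ae_UI fun y hy => hC _ (tilt_mem (θ := θ) (hb.pos hx hy) (hb.lt_one hx hy)))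
    simpa [polyMoment] using this
  | invVar =>
    refine ⟨(Real.exp (-M) * rm * (1 - rp) / (Real.exp M + 1) ^ 2)⁻¹, fun x hx θ hθ => ?_⟩
    rw [abs_inv, abs_of_pos (tiltVar_pos hb hx θ)]
    exact inv_anti₀ (varBound_pos hb M) (tiltVar_ge hb hx hθ)
  | add _ _ hF hG =>
    obtain ⟨C, hF⟩ := hF
    obtain ⟨D, hG⟩ := hG
    exact ⟨C + D, fun x hx θ h => (abs_add_le _ _).trans (add_le_add (hF x hx θ h) (hG x hx θ h))⟩
  | mul _ _ hF hG =>
    obtain ⟨C, hF⟩ := hF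
    obtain ⟨D, hG⟩ := hG
    refine ⟨C * D, fun x hx θ h => ?_⟩
    rw [abs_mul]
    have h1 := hF x hx θ h
    exact mul_le_mul h1 (hG x hx θ h) (abs_nonneg _) ((abs_nonneg _).trans h1)

/-- By the chain rule `∂/∂β [F(x, θ(x,β))] = (∂F/∂θ · V⁻¹)(x, θ(x,β))`, which stays in `DerivAlg`. The
same `F` serves all `x`, so bounds on `F` are uniform in `x`. -/
lemma iteratedDeriv_Jfun {r : ℝ → ℝ → ℝ} {rm rp : ℝ} (hb : BoundedGraphon r rm rp) (k : ℕ) :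
    ∃ F, DerivAlg r F ∧ ∀ x ∈ UI, ∀ β ∈ Set.Ioo (0:ℝ) 1,
      iteratedDeriv (k + 1) (fun b => Jfun r x b) β = F x (thetaInv r x β) := by
  induction k with
  | zero =>
    refine ⟨_, .theta, fun x hx β hβ => ?_⟩
    rw [zero_add, iteratedDeriv_one]
    exact (hasDerivAt_Jfun hb hx hβ).deriv
  | succ k ih =>
    obtain ⟨F, hF, h⟩ := ih
    obtain ⟨F', hF', hd⟩ := hF.exists_deriv hb
    refine ⟨_, hF'.mul .invVar, fun x hx β hβ => ?_⟩
    rw [iteratedDeriv_succ]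
    have he : iteratedDeriv (k + 1) (fun b => Jfun r x b) =ᶠ[nhds β]
        fun b => F x (thetaInv r x b) := by
      filter_upwards [isOpen_Ioo.mem_nhds hβ] with b hb' using h x hx b hb'
    rw [he.deriv_eq]
    exact ((hd x hx _).comp β (hasDerivAt_thetaInv hb hx hβ)).deriv

/-- **Analyticity and derivatives of `β ↦ J_r(x,β)`, with uniform bounds.** -/
theorem Jfun_derivatives
    (r : ℝ → ℝ → ℝ) (rm rp : ℝ) (hb : BoundedGraphon r rm rp)
    (x : ℝ) (hx : x ∈ UI) :
    AnalyticOnNhd ℝ (fun β => Jfun r x β) (Set.Ioo 0 1) ∧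
    (∀ β ∈ Set.Ioo (0:ℝ) 1, ∃! θ : ℝ, degMoment r x θ = β) ∧
    (∀ β ∈ Set.Ioo (0:ℝ) 1, ∀ θ : ℝ, degMoment r x θ = β →
      HasDerivAt (fun b => Jfun r x b) θ β) ∧
    (∀ β ∈ Set.Ioo (0:ℝ) 1, ∀ θ : ℝ, degMoment r x θ = β →
      HasDerivAt (deriv (fun b => Jfun r x b))
        ((∫ y in UI, tilt r θ x y * (1 - tilt r θ x y))⁻¹) β) ∧
    (∀ k : ℕ, 1 ≤ k → ∀ ε : ℝ, 0 < ε → ∃ Cb : ℝ, ∀ x' ∈ UI, ∀ β ∈ Set.Icc ε (1 - ε),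
      |iteratedDeriv k (fun b => Jfun r x' b) β| ≤ Cb) := by
  refine ⟨fun β hβ => ?_, fun β hβ => ?_, fun β hβ θ h => ?_, fun β hβ θ h => ?_, ?_⟩
  · have ht := analyticAt_thetaInv hb hx hβ
    exact ((ht.mul analyticAt_id).sub
      ((analyticAt_Lam hb hx (thetaInv r x β)).comp ht)).congr (Jfun_eventuallyEq hb hx hβ).symm
  · obtain ⟨θ, h⟩ := exists_degMoment_eq hb hx hβ
    exact ⟨θ, h, fun t ht => (degMoment_strictMono hb hx).injective (ht.trans h.symm)⟩
  · have hJ := hasDerivAt_Jfun hb hx hβ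
    rwa [← h, thetaInv_degMoment hb hx, h] at hJ
  · have hJ := hasDerivAt_thetaInv hb hx hβ
    have hθ : thetaInv r x β = θ := by rw [← h, thetaInv_degMoment hb hx]
    rw [hθ] at hJ
    refine hJ.congr_of_eventuallyEq ?_
    filter_upwards [isOpen_Ioo.mem_nhds hβ] with b hb' using (hasDerivAt_Jfun hb hx hb').deriv
  · intro k hk ε hε
    obtain ⟨n, rfl⟩ := Nat.exists_eq_add_of_le' hk
    obtain ⟨F, hF, hJ⟩ := iteratedDeriv_Jfun hb n
    obtain ⟨C, hC⟩ := hF.exists_bound hb (max (-Real.log (ε * (1 - rp))) (-Real.log (ε * rm)))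
    refine ⟨C, fun x' hx' β hβ => ?_⟩
    have hβ' : β ∈ Set.Ioo (0:ℝ) 1 := ⟨hε.trans_le hβ.1, by linarith [hβ.2]⟩
    rw [hJ x' hx' β hβ']
    have hθ := theta_bounds hb hx' (θ := thetaInv r x' β) hε
      (by rwa [degMoment_thetaInv hb hx' hβ'])
    exact hC x' hx' _ (abs_le'.2 ⟨hθ.2.trans (le_max_right _ _),
      (neg_le_neg hθ.1).trans (le_max_left _ _)⟩)
end
end

section
/- Let r be a graphon with r₋ ≤ r(x,y) ≤ r₊ for all (x,y) and some 0 < r₋ ≤ r₊ < 1, and fix x ∈ [0,1] and β ∈ (0,1). Let θ(x,β) be the unique θ ∈ ℝ with ∫₀¹ e^θ r(x,y) / (e^θ r(x,y) + 1 − r(x,y)) dy = β, and put r̂_β(x,y) = e^{θ(x,β)} r(x,y) / (e^{θ(x,β)} r(x,y) + 1 − r(x,y)). Then J_r(x,β) = ∫₀¹ R( r̂_β(x,y) | r(x,y) ) dy, i.e., the Legendre transform sup_{θ∈ℝ} [θβ − Λ_r(x,θ)] equals the relative-entropy integral of the tilted kernel r̂_β against r. -/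
/-! Write `M_θ(b) = b e^θ + 1 - b` for the Bernoulli(`b`) moment generating function, and
`a = e^θ b / M_θ(b)` for the tilted parameter. Since `a / b = e^θ / M_θ(b)` and
`(1 - a) / (1 - b) = 1 / M_θ(b)`, one has `R(a|b) = θ a - log M_θ(b)` (`relEnt_tilt`).
For any other `θ'`, `M_θ'(b) / M_θ(b) = a e^(θ' - θ) + 1 - a`, which is at least
`e^(a (θ' - θ))` by convexity of `exp`; hence `θ' a - log M_θ'(b) ≤ θ a - log M_θ(b)`
(`tilt_optimal`). Integrating both facts over `y`, with `∫ a = β`, shows that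
`θ' ↦ θ' β - Λ_r(x, θ')` is maximal at `θ`, with the relative-entropy integral as its value.
Integrability comes from `0 ≤ a ≤ 1` and `|log M_θ(b)| ≤ |θ|`. -/

open MeasureTheory Filter Set
open scoped BigOperators

noncomputable section

lemma mgf_pos {b : ℝ} (hb : b ∈ Set.Ioo (0:ℝ) 1) (θ : ℝ) : 0 < b * Real.exp θ + 1 - b := by
  have := mul_pos hb.1 (Real.exp_pos θ)
  linarith [hb.2]

/-- `M_θ(b)` is a convex combination of `1` and `e^θ`, so its logarithm lies between
`0` and `θ`. -/
lemma abs_log_mgf_le {b : ℝ} (hb : b ∈ Set.Ioo (0:ℝ) 1) (θ : ℝ) :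
    |Real.log (b * Real.exp θ + 1 - b)| ≤ |θ| := by
  have hM := mgf_pos hb θ
  rw [abs_le]
  constructor
  · rw [Real.le_log_iff_exp_le hM]
    have h1 : Real.exp (-|θ|) ≤ 1 := by simp
    have h2 : Real.exp (-|θ|) ≤ Real.exp θ := Real.exp_le_exp.2 (neg_abs_le θ)
    nlinarith [hb.1, hb.2]
  · rw [Real.log_le_iff_le_exp hM]
    have h1 : 1 ≤ Real.exp |θ| := by simp
    have h2 : Real.exp θ ≤ Real.exp |θ| := Real.exp_le_exp.2 (le_abs_self θ)
    nlinarith [hb.1, hb.2]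

lemma tilt_mem_Icc {r : ℝ → ℝ → ℝ} {x y : ℝ} (hb : r x y ∈ Set.Ioo (0:ℝ) 1) (θ : ℝ) :
    tilt r θ x y ∈ Set.Icc (0:ℝ) 1 := by
  have hM := mgf_pos hb θ
  rw [mul_comm] at hM
  have := mul_pos (Real.exp_pos θ) hb.1
  unfold tilt
  refine ⟨by positivity, ?_⟩
  rw [div_le_one hM]
  linarith [hb.2]

lemma relEnt_tilt {r : ℝ → ℝ → ℝ} {x y : ℝ} (hb : r x y ∈ Set.Ioo (0:ℝ) 1) (θ : ℝ) :
    relEnt (tilt r θ x y) (r x y) =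
      θ * tilt r θ x y - Real.log (r x y * Real.exp θ + 1 - r x y) := by
  have hM := mgf_pos hb θ
  have hb0 : r x y ≠ 0 := hb.1.ne'
  have hb1 : 1 - r x y ≠ 0 := by linarith [hb.2]
  have h1 : tilt r θ x y / r x y = Real.exp θ / (r x y * Real.exp θ + 1 - r x y) := by
    unfold tilt
    rw [mul_comm (Real.exp θ)]
    field_simp
  have h2 : (1 - tilt r θ x y) / (1 - r x y) = (r x y * Real.exp θ + 1 - r x y)⁻¹ := by
    unfold tilt
    rw [mul_comm (Real.exp θ)]
    field_simp
    ring
  unfold relEnt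
  rw [h1, h2, Real.log_div (Real.exp_pos θ).ne' hM.ne', Real.log_exp, Real.log_inv]
  ring

/-- The tangent-line inequality for the convex function `θ ↦ log M_θ(b)`, whose derivative
at `θ` is the tilted parameter. -/
lemma tilt_optimal {r : ℝ → ℝ → ℝ} {x y : ℝ} (hb : r x y ∈ Set.Ioo (0:ℝ) 1) (θ θ' : ℝ) :
    θ' * tilt r θ x y - Real.log (r x y * Real.exp θ' + 1 - r x y) ≤
      θ * tilt r θ x y - Real.log (r x y * Real.exp θ + 1 - r x y) := by
  have hM := mgf_pos hb θ
  have hM' := mgf_pos hb θ'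
  obtain ⟨ha0, ha1⟩ := tilt_mem_Icc hb θ
  have hq : (r x y * Real.exp θ' + 1 - r x y) / (r x y * Real.exp θ + 1 - r x y) =
      tilt r θ x y * Real.exp (θ' - θ) + (1 - tilt r θ x y) := by
    unfold tilt
    rw [mul_comm (Real.exp θ), Real.exp_sub]
    field_simp
    ring
  have hconv : Real.exp (tilt r θ x y * (θ' - θ)) ≤
      tilt r θ x y * Real.exp (θ' - θ) + (1 - tilt r θ x y) := by
    have := convexOn_exp.2 (mem_univ (θ' - θ)) (mem_univ (0:ℝ)) ha0
      (sub_nonneg.2 ha1) (by ring)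
    simpa using this
  rw [← hq, ← Real.le_log_iff_exp_le (div_pos hM' hM), Real.log_div hM'.ne' hM.ne'] at hconv
  linarith

lemma integrableOn_of_bdd {f : ℝ → ℝ} (hf : Measurable f) {C : ℝ}
    (hC : ∀ y ∈ UI, |f y| ≤ C) : IntegrableOn f UI :=
  IntegrableOn.of_bound (by simp [UI]) hf.aestronglyMeasurable C
    ((ae_restrict_iff' measurableSet_Icc).2 (.of_forall hC))

/-- **The Legendre transform `J_r(x,β)` equals the relative entropy of the tilted
kernel with respect to `r`.** -/
theorem Jfun_relative_entropy
    (r : ℝ → ℝ → ℝ) (rm rp : ℝ) (hb : BoundedGraphon r rm rp)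
    (x : ℝ) (hx : x ∈ UI) (β : ℝ) (hβ : β ∈ Set.Ioo (0:ℝ) 1)
    (θ : ℝ) (hθ : degMoment r x θ = β) :
    Jfun r x β = ∫ y in UI, relEnt (tilt r θ x y) (r x y) := by
  obtain ⟨⟨-, hmeas, -⟩, hm, -, hp, hbd⟩ := hb
  have hr : ∀ y ∈ UI, r x y ∈ Set.Ioo (0:ℝ) 1 := fun y hy =>
    ⟨hm.trans_le (hbd x hx y hy).1, (hbd x hx y hy).2.trans_lt hp⟩
  have hrx : Measurable (r x) := hmeas.comp measurable_prodMk_left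
  have hint_log : ∀ t : ℝ,
      IntegrableOn (fun y => Real.log (r x y * Real.exp t + 1 - r x y)) UI := fun t =>
    integrableOn_of_bdd (by fun_prop) fun y hy => abs_log_mgf_le (hr y hy) t
  have hint_tilt : IntegrableOn (fun y => tilt r θ x y) UI := by
    refine integrableOn_of_bdd (C := 1) (by unfold tilt; fun_prop) fun y hy => ?_
    rw [abs_of_nonneg (tilt_mem_Icc (hr y hy) θ).1]
    exact (tilt_mem_Icc (hr y hy) θ).2
  have hobj : ∀ t : ℝ, t * β - Lam r x t =
      ∫ y in UI, (t * tilt r θ x y - Real.log (r x y * Real.exp t + 1 - r x y)) := by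
    intro t
    rw [integral_sub (hint_tilt.const_mul t) (hint_log t), integral_const_mul, ← hθ]
    rfl
  have hmax : ∀ t : ℝ, t * β - Lam r x t ≤ θ * β - Lam r x θ := by
    intro t
    rw [hobj t, hobj θ]
    exact setIntegral_mono_on ((hint_tilt.const_mul t).sub (hint_log t))
      ((hint_tilt.const_mul θ).sub (hint_log θ)) measurableSet_Icc
      fun y hy => tilt_optimal (hr y hy) θ t
  have hval : θ * β - Lam r x θ = ∫ y in UI, relEnt (tilt r θ x y) (r x y) := by
    rw [hobj θ]
    exact setIntegral_congr_fun measurableSet_Icc fun y hy => (relEnt_tilt (hr y hy) θ).symm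
  rw [← hval]
  exact le_antisymm (ciSup_le hmax)
    (le_ciSup (f := fun t : ℝ => t * β - Lam r x t) ⟨_, forall_mem_range.2 hmax⟩ θ)
end
end
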